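/- For every permutation w ∈ S_n, the Newton polytope of the Schubert polynomial 𝔖_w equals the Schubitope S_{D(w)} of the Rothe diagram D(w) of w. -/

import Mathlib

open Finset MvPolynomial

/-- `DomLE R S`: `R` and `S` have the same cardinality and, for each `k`, the `k`-th least
element of `R` does not exceed the `k`-th least element of `S`.  The bases of the Schubert
matroid `SM_n(S)` are exactly the `B` with `DomLE B S`. -/
def DomLE {α : Type*} [LinearOrder α] (R S : Finset α) : Prop :=
  R.card = S.card ∧
    ∀ (k : ℕ) (hR : k < (R.sort (· ≤ ·)).length) (hS : k < (S.sort (· ≤ ·)).length),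
      (R.sort (· ≤ ·)).get ⟨k, hR⟩ ≤ (S.sort (· ≤ ·)).get ⟨k, hS⟩

/-- Auxiliary greedy matching count for a parenthesis word (`true` = '(', `false` = ')'),
given the current number of unmatched open parentheses. -/
def matchedPairsAux : List Bool → ℕ → ℕ
  | [], _ => 0
  | true :: rest, o => matchedPairsAux rest (o + 1)
  | false :: rest, 0 => matchedPairsAux rest 0
  | false :: rest, o + 1 => matchedPairsAux rest o + 1

/-- The number of paired `()`'s in a parenthesis word (`true` = '(', `false` = ')'). -/
def matchedPairs (w : List Bool) : ℕ := matchedPairsAux w 0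

/-- Column `j` of a diagram `D ⊆ [n]²`: the set `D_j = {i : (i,j) ∈ D}`. -/
def colSet {n : ℕ} (D : Finset (Fin n × Fin n)) (j : Fin n) : Finset (Fin n) :=
  Finset.univ.filter fun i => (i, j) ∈ D

/-- The parenthesis part of `word_{j,I}(D)`: reading rows `i` from top to bottom, record
'(' (= `true`) if `(i,j) ∉ D` and `i ∈ I`, and ')' (= `false`) if `(i,j) ∈ D` and `i ∉ I`.
(The `⋆`'s, at positions with `(i,j) ∈ D` and `i ∈ I`, play no role in the matching.) -/
def colWord {n : ℕ} (D : Finset (Fin n × Fin n)) (j : Fin n) (I : Finset (Fin n)) :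
    List Bool :=
  (List.finRange n).filterMap fun i =>
    if (i, j) ∈ D then (if i ∈ I then none else some false)
    else (if i ∈ I then some true else none)

/-- `θ_D^j(I)`: the number of paired `()`'s plus the number of `⋆`'s in `word_{j,I}(D)`. -/
def thetaCol {n : ℕ} (D : Finset (Fin n × Fin n)) (j : Fin n) (I : Finset (Fin n)) : ℕ :=
  matchedPairs (colWord D j I) + (colSet D j ∩ I).card

/-- `θ_D(I) = Σ_{j=1}^n θ_D^j(I)`. -/
def theta {n : ℕ} (D : Finset (Fin n × Fin n)) (I : Finset (Fin n)) : ℕ :=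
  ∑ j : Fin n, thetaCol D j I

/-- The Schubitope `S_D` of a diagram `D ⊆ [n]²`. -/
def schubitope {n : ℕ} (D : Finset (Fin n × Fin n)) : Set (Fin n → ℝ) :=
  {a | (∀ i, 0 ≤ a i) ∧ (∑ i, a i) = (D.card : ℝ) ∧
    ∀ I : Finset (Fin n), ∑ i ∈ I, a i ≤ (theta D I : ℝ)}

/-- The Newton polytope of a multivariate polynomial: the convex hull of the exponent
vectors of the monomials appearing with nonzero coefficient. -/
def newtonPolytope {σ : Type*} (f : MvPolynomial σ ℤ) : Set (σ → ℝ) :=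
  convexHull ℝ ((fun (d : σ →₀ ℕ) (i : σ) => ((d i : ℕ) : ℝ)) '' ↑f.support)

/-- The Rothe diagram `D(w) = {(i,j) : w(i) > j, w⁻¹(j) > i}` of a permutation `w ∈ S_n`. -/
def rothe {n : ℕ} (w : Equiv.Perm (Fin n)) : Finset (Fin n × Fin n) :=
  Finset.univ.filter fun p => p.2 < w p.1 ∧ p.1 < w⁻¹ p.2

/-! ### Covers in Bruhat order and Monk's rule -/

/-- `v` is covered by `v * swap a b`, with `a < b`. -/
def cov {n : ℕ} (v : Equiv.Perm (Fin n)) (a b : Fin n) : Prop :=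
  a < b ∧ v a < v b ∧ ∀ c, a < c → c < b → v c < v a ∨ v b < v c

lemma swap_lt_case {n : ℕ} (i j x : Fin n) :
    (x = i ∧ Equiv.swap i j x = j) ∨ (x = j ∧ Equiv.swap i j x = i) ∨
      (x ≠ i ∧ x ≠ j ∧ Equiv.swap i j x = x) := by
  by_cases h1 : x = i
  · left; subst h1; simp
  · by_cases h2 : x = j
    · right; left; subst h2; simp
    · right; right; exact ⟨h1, h2, Equiv.swap_apply_of_ne_of_ne h1 h2⟩

lemma swap_lt_swap {n : ℕ} {i j a b : Fin n} (hij : (i : ℕ) + 1 = j)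
    (hne : ¬ (a = i ∧ b = j)) (hab : a < b) :
    Equiv.swap i j a < Equiv.swap i j b := by
  rcases swap_lt_case i j a with ⟨h, h'⟩ | ⟨h, h'⟩ | ⟨h, h2, h'⟩ <;>
  rcases swap_lt_case i j b with ⟨g, g'⟩ | ⟨g, g'⟩ | ⟨g, g2, g'⟩ <;>
  rw [h', g'] <;> simp only [Fin.lt_def, Fin.ext_iff, ne_eq] at * <;> omega

lemma swap_lt_swap_iff {n : ℕ} {i j a b : Fin n} (hij : (i : ℕ) + 1 = j)
    (hne : ¬ (a = i ∧ b = j)) (hne' : ¬ (a = j ∧ b = i)) :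
    Equiv.swap i j a < Equiv.swap i j b ↔ a < b := by
  constructor
  · intro h
    have := swap_lt_swap (i := i) (j := j) (a := Equiv.swap i j a) (b := Equiv.swap i j b) hij ?_ h
    · simpa using this
    · rintro ⟨h1, h2⟩
      apply hne'
      rw [Equiv.swap_apply_eq_iff] at h1 h2
      rw [Equiv.swap_apply_left] at h1
      rw [Equiv.swap_apply_right] at h2
      exact ⟨h1, h2⟩
  · exact swap_lt_swap hij hne

lemma cov_swap {n : ℕ} (v : Equiv.Perm (Fin n)) {i j a b : Fin n} (hij : (i : ℕ) + 1 = j)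
    (hv : v i < v j) (hne : ¬ (a = i ∧ b = j)) (hne' : ¬ (a = j ∧ b = i)) :
    cov v a b ↔ (cov (v * Equiv.swap i j) (Equiv.swap i j a) (Equiv.swap i j b) ∧
      (v * Equiv.swap a b) i < (v * Equiv.swap a b) j) := by
  have key : cov (v * Equiv.swap i j) (Equiv.swap i j a) (Equiv.swap i j b) ↔
      (a < b ∧ v a < v b ∧ ∀ c, Equiv.swap i j a < Equiv.swap i j c →
        Equiv.swap i j c < Equiv.swap i j b → v c < v a ∨ v b < v c) := by
    unfold cov
    rw [swap_lt_swap_iff hij hne hne']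
    simp only [Equiv.Perm.mul_apply, Equiv.swap_apply_self]
    constructor
    · rintro ⟨h1, h2, h3⟩
      refine ⟨h1, h2, fun c hc hc' => ?_⟩
      simpa using h3 _ hc hc'
    · rintro ⟨h1, h2, h3⟩
      refine ⟨h1, h2, fun c hc hc' => ?_⟩
      exact h3 _ (by simpa using hc) (by simpa using hc')
  rw [key]
  have hinj : ∀ x y : Fin n, v x = v y → x = y := fun x y h => v.injective h
  have hil : i < j := by rw [Fin.lt_def]; omega
  have hbet : ∀ c : Fin n, i < c → j ≤ c := fun c h => by
    rw [Fin.lt_def] at h; rw [Fin.le_def]; omega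
  have hbet' : ∀ c : Fin n, c < j → c ≤ i := fun c h => by
    rw [Fin.lt_def] at h; rw [Fin.le_def]; omega
  by_cases hab : a < b
  swap
  · simp [cov, hab]
  by_cases hvab : v a < v b
  swap
  · simp [cov, hvab]
  simp only [cov, hab, hvab, true_and, Equiv.Perm.mul_apply]
  constructor
  · intro h
    constructor
    · intro c hc hc'
      by_cases e1 : a = j ∧ c = i
      · left; rw [e1.1, e1.2]; exact hv
      by_cases e2 : c = j ∧ b = i
      · right; rw [e2.1, e2.2]; exact hv
      by_cases e3 : a = i ∧ c = j
      · rw [e3.1, e3.2] at hc; simp at hc; exact absurd hc (not_lt.2 hil.le)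
      by_cases e4 : c = i ∧ b = j
      · rw [e4.1, e4.2] at hc'; simp at hc'; exact absurd hc' (not_lt.2 hil.le)
      exact h c ((swap_lt_swap_iff hij e3 e1).1 hc) ((swap_lt_swap_iff hij e4 e2).1 hc')
    · by_cases hai : a = i
      · subst hai
        have hbj : b ≠ j := fun hb => hne ⟨rfl, hb⟩
        have hjb : j < b := lt_of_le_of_ne (hbet b hab) (Ne.symm hbj)
        have := h j hil hjb
        rw [Equiv.swap_apply_left, Equiv.swap_apply_of_ne_of_ne hil.ne' hbj.symm]
        rcases this with h | h
        · exact absurd hv (not_lt.2 h.le)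
        · exact h
      by_cases hbj : b = j
      · subst hbj
        have hia : a < i := lt_of_le_of_ne (hbet' a hab) hai
        have := h i hia hil
        rw [Equiv.swap_apply_right, Equiv.swap_apply_of_ne_of_ne (Ne.symm hai) hil.ne]
        rcases this with h | h
        · exact h
        · exact absurd hv (not_lt.2 h.le)
      by_cases haj : a = j
      · subst haj
        rw [Equiv.swap_apply_left, Equiv.swap_apply_of_ne_of_ne hil.ne (hil.trans hab).ne]
        exact hv.trans hvab
      by_cases hbi : b = i
      · subst hbi
        rw [Equiv.swap_apply_right, Equiv.swap_apply_of_ne_of_ne (hab.trans hil).ne' hil.ne']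
        exact hvab.trans hv
      rw [Equiv.swap_apply_of_ne_of_ne (Ne.symm hai) (Ne.symm hbi),
        Equiv.swap_apply_of_ne_of_ne (Ne.symm haj) (Ne.symm hbj)]
      exact hv
  · rintro ⟨h, hcond⟩ c hc hc'
    by_cases e3 : a = i ∧ c = j
    · obtain ⟨rfl, rfl⟩ := e3
      rw [Equiv.swap_apply_left, Equiv.swap_apply_of_ne_of_ne hil.ne' hc'.ne] at hcond
      exact Or.inr hcond
    by_cases e4 : c = i ∧ b = j
    · obtain ⟨rfl, rfl⟩ := e4
      rw [Equiv.swap_apply_right, Equiv.swap_apply_of_ne_of_ne hc.ne' hil.ne] at hcond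
      exact Or.inl hcond
    exact h c (swap_lt_swap hij e3 hc) (swap_lt_swap hij e4 hc')

open Classical in
/-- The signed term of Monk's rule. -/
noncomputable def monkTerm {n : ℕ} (Sch : Equiv.Perm (Fin n) → MvPolynomial (Fin n) ℤ)
    (v : Equiv.Perm (Fin n)) (r s : Fin n) : MvPolynomial (Fin n) ℤ :=
  (if cov v r s then Sch (v * Equiv.swap r s) else 0) -
    (if cov v s r then Sch (v * Equiv.swap r s) else 0)

/-- The divided difference hypothesis. -/
def SchRec {n : ℕ} (Sch : Equiv.Perm (Fin n) → MvPolynomial (Fin n) ℤ) : Prop :=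
  ∀ (w : Equiv.Perm (Fin n)) (i j : Fin n), (i : ℕ) + 1 = (j : ℕ) → w i < w j →
      (X i - X j) * Sch w =
        Sch (w * Equiv.swap i j) -
          rename (Equiv.swap i j) (Sch (w * Equiv.swap i j))

lemma X_sub_ne {n : ℕ} {i j : Fin n} (h : i ≠ j) :
    (X i - X j : MvPolynomial (Fin n) ℤ) ≠ 0 := by
  intro h0
  exact h (X_injective (sub_eq_zero.1 h0))

lemma Sch_symm {n : ℕ} {Sch : Equiv.Perm (Fin n) → MvPolynomial (Fin n) ℤ}
    (hrec : SchRec Sch) (w : Equiv.Perm (Fin n)) (i j : Fin n) (hij : (i : ℕ) + 1 = (j : ℕ))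
    (h : w i < w j) : rename (Equiv.swap i j) (Sch w) = Sch w := by
  have h1 := hrec w i j hij h
  have hne : i ≠ j := by rintro rfl; exact lt_irrefl _ h
  have h2 := congrArg (rename (Equiv.swap i j)) h1
  rw [map_mul, map_sub, map_sub, rename_rename, rename_X, rename_X] at h2
  have h3 : (⇑(Equiv.swap i j) ∘ ⇑(Equiv.swap i j) : Fin n → Fin n) = id := by
    ext x; simp
  rw [h3, rename_id_apply, Equiv.swap_apply_left, Equiv.swap_apply_right] at h2
  apply mul_left_cancel₀ (X_sub_ne hne)
  linear_combination -h1 - h2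

/-- one inductive step of Monk's rule -/
lemma monk_step {n : ℕ} {Sch : Equiv.Perm (Fin n) → MvPolynomial (Fin n) ℤ}
    (hrec : SchRec Sch) (v : Equiv.Perm (Fin n)) (i j r : Fin n) (hij : (i : ℕ) + 1 = (j : ℕ))
    (h : v i < v j)
    (hu : X (Equiv.swap i j r) * Sch (v * Equiv.swap i j) =
      ∑ s, monkTerm Sch (v * Equiv.swap i j) (Equiv.swap i j r) s) :
    X r * Sch v = ∑ s, monkTerm Sch v r s := by
  classical
  have hne : i ≠ j := by rintro rfl; exact lt_irrefl _ h
  have hil : i < j := by rw [Fin.lt_def]; omega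
  set u := v * Equiv.swap i j with hudef
  have hui : u i = v j := by simp [hudef]
  have huj : u j = v i := by simp [hudef]
  -- the effect of `f ↦ f - sᵢ f` on one Schubert polynomial
  have hterm : ∀ a b : Fin n, ¬ (a = i ∧ b = j) → ¬ (a = j ∧ b = i) →
      ∀ P : Prop, ∀ Q : Prop, ∀ [Decidable P] [Decidable Q],
      (P ↔ (Q ∧ (v * Equiv.swap a b) i < (v * Equiv.swap a b) j)) →
      (if Q then Sch (u * Equiv.swap (Equiv.swap i j a) (Equiv.swap i j b)) else 0) -
        rename (Equiv.swap i j)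
          (if Q then Sch (u * Equiv.swap (Equiv.swap i j a) (Equiv.swap i j b)) else 0) =
      (X i - X j) * (if P then Sch (v * Equiv.swap a b) else 0) := by
    intro a b _ _ P Q _ _ hPQ
    set y := v * Equiv.swap a b with hy
    have hyy : u * Equiv.swap (Equiv.swap i j a) (Equiv.swap i j b) = y * Equiv.swap i j := by
      rw [hudef, hy, mul_assoc, mul_assoc]
      congr 1
      rw [Equiv.mul_swap_eq_swap_mul, Equiv.swap_apply_self, Equiv.swap_apply_self]
    rw [hyy]
    by_cases hQ : Q
    · by_cases hlt : y i < y j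
      · have hP : P := hPQ.2 ⟨hQ, hlt⟩
        simp only [hQ, hP, if_true]
        exact (hrec y i j hij hlt).symm
      · have hP : ¬ P := fun hP => hlt (hPQ.1 hP).2
        simp only [hQ, hP, if_true, if_false, mul_zero]
        rw [Sch_symm hrec _ i j hij, sub_self]
        have : y i ≠ y j := fun e => hne (y.injective e)
        simpa using lt_of_le_of_ne (not_lt.1 hlt) this.symm
    · have hP : ¬ P := fun hP => hQ (hPQ.1 hP).1
      simp [hQ, hP]
  have hmt : ∀ s : Fin n, monkTerm Sch u (Equiv.swap i j r) (Equiv.swap i j s) -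
      rename (Equiv.swap i j) (monkTerm Sch u (Equiv.swap i j r) (Equiv.swap i j s)) =
      (X i - X j) * monkTerm Sch v r s -
        (X i - X j) * ((if r = i ∧ s = j then Sch u else 0) -
          (if r = j ∧ s = i then Sch u else 0)) := by
    intro s
    by_cases h1 : r = i ∧ s = j
    · obtain ⟨rfl, rfl⟩ := h1
      have c1 : cov v r s := ⟨hil, h, fun c hc hc' => by
        rw [Fin.lt_def] at hc hc'; omega⟩
      have c2 : ¬ cov v s r := fun hc => lt_asymm hc.1 hil
      have c3 : ¬ cov u s r := fun hc => lt_asymm hc.1 hil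
      have c4 : ¬ cov u r s := fun hc => by
        have := hc.2.1; rw [hui, huj] at this; exact lt_asymm this h
      rw [Equiv.swap_apply_left, Equiv.swap_apply_right]
      simp only [monkTerm, if_pos c1, if_neg c2, if_neg c3, if_neg c4]
      simp [hne, hudef]
    by_cases h2 : r = j ∧ s = i
    · obtain ⟨rfl, rfl⟩ := h2
      have c1 : cov v s r := ⟨hil, h, fun c hc hc' => by
        rw [Fin.lt_def] at hc hc'; omega⟩
      have c2 : ¬ cov v r s := fun hc => lt_asymm hc.1 hil
      have c3 : ¬ cov u r s := fun hc => lt_asymm hc.1 hil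
      have c4 : ¬ cov u s r := fun hc => by
        have := hc.2.1; rw [hui, huj] at this; exact lt_asymm this h
      rw [Equiv.swap_apply_left, Equiv.swap_apply_right, Equiv.swap_comm s r]
      simp only [monkTerm, if_pos c1, if_neg c2, if_neg c3, if_neg c4]
      simp [hne.symm, hudef, Equiv.swap_comm s r]
    rw [if_neg h1, if_neg h2, sub_zero, mul_zero, sub_zero]
    unfold monkTerm
    rw [map_sub, mul_sub, ← hterm r s h1 h2 _ _ (cov_swap v hij h h1 h2),
      ← hterm r s h1 h2 (cov v s r) (cov u (Equiv.swap i j s) (Equiv.swap i j r)) ?_]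
    · ring
    · rw [cov_swap v hij h (fun e => h2 ⟨e.2, e.1⟩) (fun e => h1 ⟨e.2, e.1⟩),
        Equiv.swap_comm s r]
  have hsum := Finset.sum_congr (rfl : (Finset.univ : Finset (Fin n)) = _) (fun s _ => hmt s)
  rw [Finset.sum_sub_distrib, Finset.sum_sub_distrib, ← map_sum, ← Finset.mul_sum,
    ← Finset.mul_sum, Equiv.sum_comp (Equiv.swap i j) (fun s => monkTerm Sch u (Equiv.swap i j r) s),
    ← hu, Finset.sum_sub_distrib] at hsum
  have hv := hrec v i j hij h
  rw [map_mul, rename_X, Equiv.swap_apply_self] at hsum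
  apply mul_left_cancel₀ (X_sub_ne hne)
  by_cases h1 : r = i
  · subst h1
    simp [hne] at hsum
    linear_combination hsum + X r * hv
  by_cases h2 : r = j
  · subst h2
    simp [hne.symm] at hsum
    linear_combination hsum + X r * hv
  simp [h1, h2, Equiv.swap_apply_of_ne_of_ne h1 h2] at hsum
  linear_combination hsum + X r * hv

/-! ### Dominant permutations, Monk's rule and the transition formula -/

lemma lex_ind {n : ℕ} {P : Equiv.Perm (Fin n) → Prop}
    (h : ∀ w, (∀ w' : Equiv.Perm (Fin n), (∃ q, (∀ k, k < q → w k = w' k) ∧ w q < w' q) → P w') →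
      P w) (w : Equiv.Perm (Fin n)) : P w := by
  have hwf : WellFounded (fun a b : Lex (Fin n → Fin n) => b < a) := wellFounded_gt
  refine (InvImage.wf (fun w : Equiv.Perm (Fin n) => toLex (w : Fin n → Fin n)) hwf).induction w ?_
  intro w ih
  refine h w (fun w' ⟨q, hq, hq'⟩ => ih w' ?_)
  exact ⟨q, hq, hq'⟩

lemma anti_seg {n : ℕ} (v : Equiv.Perm (Fin n)) (a : Fin n) : ∀ k : ℕ, ∀ b : Fin n,
    (b : ℕ) = a + k → (∀ i j : Fin n, (i : ℕ) + 1 = j → a ≤ i → j ≤ b → ¬ v i < v j) →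
    v b ≤ v a := by
  intro k
  induction k with
  | zero => 
    intro b hb _
    have : b = a := Fin.ext (by omega)
    rw [this]
  | succ k ih =>
    intro b hb h
    let c : Fin n := ⟨a + k, by omega⟩
    have h1 : v c ≤ v a := ih c rfl (fun i j hij hai hjc => h i j hij hai (by
      rw [Fin.le_def] at *; simp only [c] at hjc; omega))
    have h2 := h c b (by simp only [c]; omega) (by rw [Fin.le_def]; simp [c]) le_rfl
    exact (not_lt.1 h2).trans h1

lemma anti_lt {n : ℕ} (v : Equiv.Perm (Fin n)) {a b : Fin n} (hab : a < b)
    (h : ∀ i j : Fin n, (i : ℕ) + 1 = j → a ≤ i → j ≤ b → ¬ v i < v j) : v b < v a := by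
  rw [Fin.lt_def] at hab
  refine lt_of_le_of_ne (anti_seg v a (b - a) b (by omega) h) ?_
  intro e
  have := v.injective e
  subst this
  omega

lemma eq_rev {n : ℕ} (v : Equiv.Perm (Fin n))
    (h : ∀ i j : Fin n, (i : ℕ) + 1 = j → ¬ v i < v j) : v = Fin.revPerm := by
  have h1 : StrictMono (fun x => v (Fin.rev x)) := by
    intro x y hxy
    exact anti_lt v (Fin.rev_lt_rev.2 hxy) (fun i j hij _ _ => h i j hij)
  have h2 : (fun x => v (Fin.rev x)) = id := by
    refine (StrictMono.range_inj h1 strictMono_id).1 ?_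
    rw [Set.range_id, Set.range_eq_univ]
    exact v.surjective.comp Fin.rev_surjective
  ext x
  have := congrFun h2 (Fin.rev x)
  simp only [Fin.rev_rev, id] at this
  rw [this]; simp

/-- Lehmer code -/
def lcode {n : ℕ} (w : Equiv.Perm (Fin n)) (a : Fin n) : ℕ :=
  (Finset.univ.filter fun b => a < b ∧ w b < w a).card

/-- 132-avoiding -/
def Dom {n : ℕ} (w : Equiv.Perm (Fin n)) : Prop :=
  ∀ a b c, a < b → b < c → w a < w c → w c < w b → False

lemma dom_step {n : ℕ} (w : Equiv.Perm (Fin n)) {i j : Fin n} (hij : (i : ℕ) + 1 = j)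
    (hw : w i < w j) (hi : ∀ a, a < i → w i < w a) (hd : Dom w) :
    Dom (w * Equiv.swap i j) := by
  intro a b c hab hbc h1 h2
  by_cases e1 : a = i ∧ b = j
  · obtain ⟨rfl, rfl⟩ := e1
    simp at h1 h2
    exact lt_asymm hw (h1.trans h2)
  by_cases e2 : b = i ∧ c = j
  · obtain ⟨rfl, rfl⟩ := e2
    have hac : a ≠ c := (hab.trans hbc).ne
    simp [Equiv.swap_apply_of_ne_of_ne hab.ne hac] at h1
    exact lt_asymm h1 (hi a hab)
  exact hd _ _ _ (swap_lt_swap hij e1 hab) (swap_lt_swap hij e2 hbc) h1 h2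

lemma lcode_eq {n : ℕ} (w : Equiv.Perm (Fin n)) {i j : Fin n} (hij : (i : ℕ) + 1 = j)
    (hw : w i < w j) (hd : Dom w) : lcode w i = lcode w j := by
  unfold lcode
  congr 1
  ext b
  simp only [Finset.mem_filter, Finset.mem_univ, true_and]
  constructor
  · rintro ⟨h1, h2⟩
    have hbj : b ≠ j := by rintro rfl; exact lt_asymm hw h2
    refine ⟨?_, h2.trans hw⟩
    rw [Fin.lt_def] at *; rw [ne_eq, Fin.ext_iff] at hbj; omega
  · rintro ⟨h1, h2⟩
    have hib : i < b := by rw [Fin.lt_def] at *; omega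
    refine ⟨hib, ?_⟩
    have hne : w b ≠ w i := fun e => hib.ne' (w.injective e)
    by_contra hlt
    exact hd i j b (by rw [Fin.lt_def]; omega) h1 (lt_of_le_of_ne (not_lt.1 hlt) hne.symm) h2

lemma lcode_step {n : ℕ} (w : Equiv.Perm (Fin n)) {i j : Fin n} (hij : (i : ℕ) + 1 = j)
    (hw : w i < w j) (hd : Dom w) (a : Fin n) :
    lcode (w * Equiv.swap i j) a = lcode w a + if a = i then 1 else 0 := by
  have hil : i < j := by rw [Fin.lt_def]; omega
  have hbet : ∀ c : Fin n, i < c → c ≠ j → j < c := fun c h h' => by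
    rw [Fin.lt_def] at *; rw [ne_eq, Fin.ext_iff] at h'; omega
  by_cases hai : a = i
  · subst hai
    rw [if_pos rfl, lcode_eq w hij hw hd]
    unfold lcode
    have : (Finset.univ.filter fun b => a < b ∧ (w * Equiv.swap a j) b < (w * Equiv.swap a j) a)
        = insert j (Finset.univ.filter fun b => j < b ∧ w b < w j) := by
      ext b
      simp only [Finset.mem_filter, Finset.mem_univ, true_and, Finset.mem_insert,
        Equiv.Perm.mul_apply, Equiv.swap_apply_left]
      by_cases hb : b = j
      · subst hb; simp [hil, hw]
      · constructor
        · rintro ⟨h1, h2⟩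
          rw [Equiv.swap_apply_of_ne_of_ne h1.ne' hb] at h2
          exact Or.inr ⟨hbet b h1 hb, h2⟩
        · rintro (h | ⟨h1, h2⟩)
          · exact absurd h hb
          · have h3 := hil.trans h1
            rw [Equiv.swap_apply_of_ne_of_ne h3.ne' hb]
            exact ⟨h3, h2⟩
    rw [this, Finset.card_insert_of_notMem (by simp)]
  rw [if_neg hai, add_zero]
  by_cases haj : a = j
  · subst haj
    rw [← lcode_eq w hij hw hd]
    unfold lcode
    congr 1
    ext b
    simp only [Finset.mem_filter, Finset.mem_univ, true_and,
        Equiv.Perm.mul_apply, Equiv.swap_apply_right]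
    constructor
    · rintro ⟨h1, h2⟩
      rw [Equiv.swap_apply_of_ne_of_ne (hil.trans h1).ne' h1.ne'] at h2
      exact ⟨hil.trans h1, h2⟩
    · rintro ⟨h1, h2⟩
      have hb : b ≠ a := by rintro rfl; exact lt_asymm hw h2
      rw [Equiv.swap_apply_of_ne_of_ne h1.ne' hb]
      exact ⟨hbet b h1 hb, h2⟩
  · unfold lcode
    refine Finset.card_equiv (Equiv.swap i j) ?_
    intro b
    simp only [Finset.mem_filter, Finset.mem_univ, true_and,
        Equiv.Perm.mul_apply, Equiv.swap_apply_of_ne_of_ne hai haj]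
    have := swap_lt_swap_iff (a := a) (b := b) hij (fun e => hai e.1) (fun e => haj e.1)
    rw [Equiv.swap_apply_of_ne_of_ne hai haj] at this
    rw [this]

lemma dom_prod {n : ℕ} (w : Equiv.Perm (Fin n)) {i j : Fin n} (hij : (i : ℕ) + 1 = j)
    (hw : w i < w j) (hd : Dom w) :
    (∏ a, X a ^ lcode (w * Equiv.swap i j) a : MvPolynomial (Fin n) ℤ) =
      X i * ∏ a, X a ^ lcode w a := by
  simp only [lcode_step w hij hw hd, pow_add, Finset.prod_mul_distrib]
  rw [mul_comm]
  congr 1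
  simp

lemma dominant_formula {n : ℕ} {Sch : Equiv.Perm (Fin n) → MvPolynomial (Fin n) ℤ}
    (hbase : Sch Fin.revPerm = ∏ i : Fin n, X i ^ (n - 1 - (i : ℕ)))
    (hrec : SchRec Sch) (w : Equiv.Perm (Fin n)) :
    Dom w → Sch w = ∏ a, X a ^ lcode w a := by
  induction w using lex_ind with
  | h w ih =>
  intro hd
  by_cases hasc : ∃ m : ℕ, ∃ i j : Fin n, (i : ℕ) = m ∧ (i : ℕ) + 1 = j ∧ w i < w j
  · classical
    obtain ⟨i, j, him, hij, hw⟩ := Nat.find_spec hasc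
    have hmin := fun m hm => Nat.find_min hasc (m := m) hm
    have hi : ∀ a, a < i → w i < w a := by
      intro a ha
      refine anti_lt w ha (fun i' j' hij' _ hj' hlt => ?_)
      refine hmin i' ?_ ⟨i', j', rfl, hij', hlt⟩
      rw [← him]; rw [Fin.le_def] at hj'; omega
    have hne : i ≠ j := by rintro rfl; exact lt_irrefl _ hw
    have hil : i < j := by rw [Fin.lt_def]; omega
    have hu := ih (w * Equiv.swap i j) ⟨i, fun k hk => by
      simp [Equiv.swap_apply_of_ne_of_ne hk.ne (hk.trans hil).ne], by simpa using hw⟩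
      (dom_step w hij hw hi hd)
    rw [dom_prod w hij hw hd] at hu
    apply mul_left_cancel₀ (X_sub_ne hne)
    have hsym : rename (Equiv.swap i j) (∏ a, X a ^ lcode w a : MvPolynomial (Fin n) ℤ) =
        ∏ a, X a ^ lcode w a := by
      simp only [map_prod, map_pow, rename_X]
      rw [← Equiv.prod_comp (Equiv.swap i j)]
      refine Finset.prod_congr rfl (fun a _ => ?_)
      rw [Equiv.swap_apply_self]
      congr 1
      have := lcode_eq w hij hw hd
      rcases swap_lt_case i j a with ⟨h, h'⟩ | ⟨h, h'⟩ | ⟨h, h2, h'⟩ <;> rw [h'] <;> simp [h, this]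
    rw [hrec w i j hij hw, hu, map_mul, hsym, rename_X, Equiv.swap_apply_left]
    ring
  · have : w = Fin.revPerm := eq_rev w (fun i j hij h => hasc ⟨i, i, j, rfl, hij, h⟩)
    rw [this, hbase]
    refine Finset.prod_congr rfl (fun a _ => ?_)
    congr 1
    unfold lcode
    have : (Finset.univ.filter fun b : Fin n => a < b ∧ Fin.revPerm b < Fin.revPerm a) =
      Finset.Ioi a := by
      ext b; simp
    rw [this, Fin.card_Ioi]

lemma monk {n : ℕ} {Sch : Equiv.Perm (Fin n) → MvPolynomial (Fin n) ℤ}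
    (hbase : Sch Fin.revPerm = ∏ i : Fin n, X i ^ (n - 1 - (i : ℕ)))
    (hrec : SchRec Sch) (v : Equiv.Perm (Fin n)) :
    ∀ r, (∃ k, r < k ∧ v r < v k) → X r * Sch v = ∑ s, monkTerm Sch v r s := by
  induction v using lex_ind with
  | h v ih =>
  intro r hk
  by_cases hgood : ∃ i j : Fin n, (i : ℕ) + 1 = j ∧ v i < v j ∧
      ∃ k, r < k ∧ v r < v k ∧ ¬ (r = i ∧ k = j)
  · obtain ⟨i, j, hij, hv, k, hrk, hvk, hne⟩ := hgood
    have hil : i < j := by rw [Fin.lt_def]; omega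
    refine monk_step hrec v i j r hij hv (ih _ ⟨i, fun k hk => ?_, ?_⟩ _ ?_)
    · simp [Equiv.swap_apply_of_ne_of_ne hk.ne (hk.trans hil).ne]
    · simpa using hv
    · exact ⟨Equiv.swap i j k, swap_lt_swap hij hne hrk, by simpa using hvk⟩
  · obtain ⟨k, hrk, hvk⟩ := hk
    have hall : ∀ i j : Fin n, (i : ℕ) + 1 = j → v i < v j → ∀ k', r < k' → v r < v k' →
        r = i ∧ k' = j := by
      intro i j hij hv k' h1 h2
      by_contra h3
      exact hgood ⟨i, j, hij, hv, k', h1, h2, h3⟩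
    have hex : ∃ i j : Fin n, (i : ℕ) + 1 = j ∧ v i < v j := by
      by_contra hcon
      push Not at hcon
      exact lt_asymm hvk (anti_lt v hrk (fun i j hij _ _ h => not_lt.2 (hcon i j hij) h))
    obtain ⟨i, j, hij, hv⟩ := hex
    obtain ⟨rfl, rfl⟩ := hall i j hij hv k hrk hvk
    have hanti : ∀ a b, a < b → (r < a ∨ b ≤ r) → v b < v a := by
      intro a b hab hor
      refine anti_lt v hab (fun i j hij' h1 h2 h3 => ?_)
      have := (hall i j hij' h3 k hrk hvk).1
      rw [← this] at h1 hij'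
      rcases hor with h | h
      · exact absurd h (not_lt.2 h1)
      · rw [Fin.le_def] at *; omega
    have hd : Dom v := by
      intro a b c hab hbc h1 h2
      by_cases hra : r < a
      · exact lt_asymm (h1.trans h2) (hanti a b hab (Or.inl hra))
      by_cases hbr : b ≤ r
      · exact lt_asymm (h1.trans h2) (hanti a b hab (Or.inr hbr))
      have hra' : v r ≤ v a := by
        rcases lt_or_eq_of_le (not_lt.1 hra) with h | h
        · exact (hanti a r h (Or.inr le_rfl)).le
        · rw [h]
      have hc := (hall r k hij hv c ((not_le.1 hbr).trans hbc) (lt_of_le_of_lt hra' h1)).2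
      rw [Fin.lt_def] at hbc
      rw [not_le, Fin.lt_def] at hbr
      rw [Fin.ext_iff] at hc
      omega
    have hi : ∀ a, a < r → v r < v a := fun a ha => hanti a r ha (Or.inr le_rfl)
    have hcovk : cov v r k := ⟨hrk, hvk, fun c hc hc' => by
        rw [Fin.lt_def] at hc hc'; omega⟩
    rw [Finset.sum_eq_single k]
    · unfold monkTerm
      rw [if_pos hcovk, if_neg (fun h => lt_asymm h.1 hrk), sub_zero,
        dominant_formula hbase hrec _ hd, dominant_formula hbase hrec _ (dom_step v hij hv hi hd),
        dom_prod v hij hv hd]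
    · intro s _ hs
      have h1 : ¬ cov v r s := fun h => hs (hall r k hij hv s h.1 h.2.1).2
      have h2 : ¬ cov v s r := fun h => lt_asymm h.2.1 (hi s h.1)
      simp [monkTerm, h1, h2]
    · simp

open Classical in
lemma transition {n : ℕ} {Sch : Equiv.Perm (Fin n) → MvPolynomial (Fin n) ℤ}
    (hbase : Sch Fin.revPerm = ∏ i : Fin n, X i ^ (n - 1 - (i : ℕ)))
    (hrec : SchRec Sch) (w : Equiv.Perm (Fin n)) (r s : Fin n) (hrs : r < s) (hw : w s < w r)
    (h1 : ∀ a b, r < a → a < b → w a < w b) (h2 : ∀ b, s < b → w r < w b) :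
    Sch w = X r * Sch (w * Equiv.swap r s) +
      ∑ q, if cov (w * Equiv.swap r s) q r then
        Sch (w * Equiv.swap r s * Equiv.swap q r) else 0 := by
  set v := w * Equiv.swap r s with hv
  have hvr : v r = w s := by simp [hv]
  have hvs : v s = w r := by simp [hv]
  have hvo : ∀ x, x ≠ r → x ≠ s → v x = w x := fun x hx hx' => by
    simp [hv, Equiv.swap_apply_of_ne_of_ne hx hx']
  have hm := monk hbase hrec v r ⟨s, hrs, by rw [hvr, hvs]; exact hw⟩
  have hcov : ∀ x, cov v r x ↔ x = s := by
    intro x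
    constructor
    · rintro ⟨hx1, hx2, hx3⟩
      by_contra hxs
      rw [hvr, hvo x hx1.ne' hxs] at hx2
      rcases lt_or_gt_of_ne hxs with h | h
      · exact lt_asymm hx2 (h1 x s hx1 h)
      · have h3 := hx3 s hrs h
        rw [hvs, hvr, hvo x hx1.ne' hxs] at h3
        rcases h3 with h3 | h3
        · exact lt_asymm h3 hw
        · exact lt_asymm h3 (h2 x h)
    · rintro rfl
      refine ⟨hrs, by rw [hvr, hvs]; exact hw, fun c hc hc' => ?_⟩
      rw [hvr, hvo c hc.ne' hc'.ne]
      exact Or.inl (h1 c x hc hc')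
  have hws : v * Equiv.swap r s = w := by simp [hv]
  unfold monkTerm at hm
  simp only [hcov, Finset.sum_sub_distrib, Finset.sum_ite_eq', Finset.mem_univ, if_true, hws] at hm
  rw [hm]
  simp only [Equiv.swap_comm r]
  ring

/-! ### Rank functions of Schubert matroids -/

/-- number of elements of `I` below `t` -/
def Lc {n : ℕ} (I : Finset (Fin n)) (t : ℕ) : ℕ := (I.filter fun i : Fin n => (i : ℕ) < t).card

/-- number of elements of `S` that are at least `t` -/
def Gc {n : ℕ} (S : Finset (Fin n)) (t : ℕ) : ℕ := (S.filter fun i : Fin n => t ≤ (i : ℕ)).card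

/-- rank function of the Schubert matroid -/
noncomputable def rk {n : ℕ} (S I : Finset (Fin n)) : ℕ :=
  sInf (Set.range fun t : ℕ => Lc I t + Gc S t)

lemma rk_le {n : ℕ} (S I : Finset (Fin n)) (t : ℕ) : rk S I ≤ Lc I t + Gc S t :=
  Nat.sInf_le ⟨t, rfl⟩

lemma rk_att {n : ℕ} (S I : Finset (Fin n)) : ∃ t : ℕ, rk S I = Lc I t + Gc S t := by
  obtain ⟨t, ht⟩ := Nat.sInf_mem (Set.range_nonempty fun t : ℕ => Lc I t + Gc S t)
  exact ⟨t, ht.symm⟩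

lemma Lc_mono {n : ℕ} (I : Finset (Fin n)) {a b : ℕ} (h : a ≤ b) : Lc I a ≤ Lc I b := by
  apply Finset.card_le_card
  intro x
  simp only [Finset.mem_filter]
  exact fun ⟨h1, h2⟩ => ⟨h1, by omega⟩

lemma Lc_sub {n : ℕ} {I J : Finset (Fin n)} (h : I ⊆ J) (a : ℕ) : Lc I a ≤ Lc J a :=
  Finset.card_le_card (Finset.filter_subset_filter _ h)

lemma Gc_sub {n : ℕ} {I J : Finset (Fin n)} (h : I ⊆ J) (a : ℕ) : Gc I a ≤ Gc J a :=
  Finset.card_le_card (Finset.filter_subset_filter _ h)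

lemma Gc_union {n : ℕ} {A F : Finset (Fin n)} (h : Disjoint A F) (t : ℕ) :
    Gc (A ∪ F) t = Gc A t + Gc F t := by
  unfold Gc
  rw [Finset.filter_union, Finset.card_union_of_disjoint]
  exact Finset.disjoint_filter_filter h

lemma Lc_union {n : ℕ} {A F : Finset (Fin n)} (h : Disjoint A F) (t : ℕ) :
    Lc (A ∪ F) t = Lc A t + Lc F t := by
  unfold Lc
  rw [Finset.filter_union, Finset.card_union_of_disjoint]
  exact Finset.disjoint_filter_filter h

lemma Lc_diff {n : ℕ} {I J : Finset (Fin n)} (h : I ⊆ J) {a b : ℕ} (hab : a ≤ b) :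
    Lc I b + Lc J a ≤ Lc J b + Lc I a := by
  have h1 : J = I ∪ (J \ I) := (Finset.union_sdiff_of_subset h).symm
  have h2 : Disjoint I (J \ I) := Finset.disjoint_sdiff
  have h3 := Lc_mono (J \ I) hab
  rw [h1, Lc_union h2, Lc_union h2]
  omega

lemma Gc_single {n : ℕ} (x : Fin n) (t : ℕ) :
    Gc ({x} : Finset (Fin n)) t = if t ≤ (x : ℕ) then 1 else 0 := by
  unfold Gc
  rw [Finset.filter_singleton]
  split_ifs <;> simp

lemma Lc_single {n : ℕ} (x : Fin n) (t : ℕ) :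
    Lc ({x} : Finset (Fin n)) t = if (x : ℕ) < t then 1 else 0 := by
  unfold Lc
  rw [Finset.filter_singleton]
  split_ifs <;> simp

lemma Gc_insert {n : ℕ} {S : Finset (Fin n)} {x : Fin n} (h : x ∉ S) (t : ℕ) :
    Gc (insert x S) t = Gc S t + if t ≤ (x : ℕ) then 1 else 0 := by
  rw [Finset.insert_eq, Gc_union (by simpa using h), Gc_single, add_comm]

lemma Lc_insert_le {n : ℕ} (S : Finset (Fin n)) (x : Fin n) (t : ℕ) :
    Lc (insert x S) t ≤ Lc S t + 1 := by
  by_cases h : x ∈ S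
  · rw [Finset.insert_eq_of_mem h]; omega
  · rw [Finset.insert_eq, Lc_union (by simpa using h), Lc_single]
    split_ifs <;> omega

lemma Lc_succ {n : ℕ} (I : Finset (Fin n)) (r : Fin n) :
    Lc I (r + 1) = Lc I r + if r ∈ I then 1 else 0 := by
  by_cases h : r ∈ I
  · rw [if_pos h]
    unfold Lc
    have : (I.filter fun i : Fin n => (i : ℕ) < r + 1) = insert r (I.filter fun i : Fin n => (i : ℕ) < r) := by
      ext x; simp only [Finset.mem_filter, Finset.mem_insert, Fin.ext_iff]
      constructor
      · rintro ⟨h1, h2⟩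
        by_cases h3 : (x : ℕ) = r
        · exact Or.inl h3
        · exact Or.inr ⟨h1, by omega⟩
      · rintro (h1 | ⟨h1, h2⟩)
        · have : x = r := Fin.ext h1
          subst this; exact ⟨h, by omega⟩
        · exact ⟨h1, by omega⟩
    rw [this, Finset.card_insert_of_notMem (by simp)]
  · rw [if_neg h, add_zero]
    unfold Lc
    congr 1
    ext x; simp only [Finset.mem_filter]
    constructor
    · rintro ⟨h1, h2⟩
      have : x ≠ r := by rintro rfl; exact h h1
      rw [ne_eq, Fin.ext_iff] at this
      exact ⟨h1, by omega⟩
    · rintro ⟨h1, h2⟩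
      exact ⟨h1, by omega⟩

lemma LG {n : ℕ} (S : Finset (Fin n)) (t : ℕ) : Lc S t + Gc S t = S.card := by
  unfold Lc Gc
  rw [← Finset.card_filter_add_card_filter_not (s := S) (fun i : Fin n => (i : ℕ) < t)]
  simp only [not_lt]

lemma Gc_zero {n : ℕ} {S : Finset (Fin n)} {t : ℕ} (h : ∀ i ∈ S, (i : ℕ) < t) : Gc S t = 0 := by
  unfold Gc
  rw [Finset.card_eq_zero, Finset.filter_eq_empty_iff]
  intro x hx
  have := h x hx
  omega

lemma Gc_card {n : ℕ} {S : Finset (Fin n)} {t : ℕ} (h : ∀ i ∈ S, t ≤ (i : ℕ)) :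
    Gc S t = S.card := by
  unfold Gc
  rw [Finset.filter_true_of_mem h]

lemma Gc_le_card {n : ℕ} (S : Finset (Fin n)) (t : ℕ) : Gc S t ≤ S.card :=
  Finset.card_filter_le _ _

lemma Gc_congr {n : ℕ} {S T : Finset (Fin n)} {t : ℕ}
    (h : ∀ i : Fin n, t ≤ (i : ℕ) → (i ∈ S ↔ i ∈ T)) : Gc S t = Gc T t := by
  unfold Gc
  congr 1
  ext x
  simp only [Finset.mem_filter]
  constructor
  · exact fun ⟨h1, h2⟩ => ⟨(h x h2).1 h1, h2⟩
  · exact fun ⟨h1, h2⟩ => ⟨(h x h2).2 h1, h2⟩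

lemma rk_mono {n : ℕ} {A B : Finset (Fin n)} (h : A ⊆ B) (I : Finset (Fin n)) :
    rk A I ≤ rk B I := by
  obtain ⟨t, ht⟩ := rk_att B I
  have := rk_le A I t
  have := Gc_sub h t
  omega

lemma rk_univ {n : ℕ} (S : Finset (Fin n)) : rk S Finset.univ = S.card := by
  apply le_antisymm
  · have := rk_le S Finset.univ 0
    have h1 : Lc (Finset.univ : Finset (Fin n)) 0 = 0 := by simp [Lc]
    have := Gc_le_card S 0
    omega
  · obtain ⟨t, ht⟩ := rk_att S Finset.univ
    have := Lc_sub (Finset.subset_univ S) t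
    have := LG S t
    omega

lemma rk_R1 {n : ℕ} {S : Finset (Fin n)} {r : Fin n} (hS : ∀ i ∈ S, i < r)
    (I : Finset (Fin n)) : rk S I + (if r ∈ I then 1 else 0) ≤ rk (insert r S) I := by
  have hr : r ∉ S := fun h => lt_irrefl _ (hS r h)
  obtain ⟨t, ht⟩ := rk_att (insert r S) I
  rw [ht, Gc_insert hr]
  by_cases h : t ≤ (r : ℕ)
  · have := rk_le S I t
    rw [if_pos h]; split_ifs <;> omega
  · have h1 := rk_le S I r
    rw [Gc_zero (t := (r : ℕ)) hS] at h1
    have h2 := Lc_succ I r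
    have h3 := Lc_mono I (show (r : ℕ) + 1 ≤ t by omega)
    omega

lemma rk_R1' {n : ℕ} {S : Finset (Fin n)} {r : Fin n} (hS : ∀ i ∈ S, i < r)
    (I : Finset (Fin n))
    (h : r ∉ I → ∀ t : ℕ, t < r → Lc I r ≤ Lc I t + Gc S t) :
    rk S I + (if r ∈ I then 1 else 0) = rk (insert r S) I := by
  refine le_antisymm (rk_R1 hS I) ?_
  have hr : r ∉ S := fun h => lt_irrefl _ (hS r h)
  obtain ⟨t, ht⟩ := rk_att S I
  by_cases hI : r ∈ I
  · have := rk_le (insert r S) I t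
    rw [Gc_insert hr] at this
    rw [if_pos hI]
    split_ifs at this <;> omega
  · have h1 := rk_le (insert r S) I (r + 1)
    rw [Gc_zero (S := insert r S), Lc_succ, if_neg hI] at h1
    · rw [if_neg hI]
      by_cases htr : t < r
      · have := h hI t htr; omega
      · have := Lc_mono I (not_lt.1 htr); omega
    · intro i hi
      rcases Finset.mem_insert.1 hi with rfl | hi
      · omega
      · have := hS i hi; rw [Fin.lt_def] at this; omega

lemma rk_R2 {n : ℕ} {D : Finset (Fin n)} {q r : Fin n} (hqr : q < r) (hq : q ∉ D) (hr : r ∉ D)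
    (I : Finset (Fin n)) : rk (insert q D) I ≤ rk (insert r D) I := by
  obtain ⟨t, ht⟩ := rk_att (insert r D) I
  have h1 := rk_le (insert q D) I t
  rw [Gc_insert hq] at h1
  rw [Gc_insert hr] at ht
  rw [Fin.lt_def] at hqr
  split_ifs at * <;> omega

/-- chain members contained in the critical one -/
def SmallC {n : ℕ} (S I : Finset (Fin n)) (t r : Fin n) : Prop :=
  r ∉ I ∧ (∀ t' : ℕ, t < t' → t' ≤ r → Lc I r ≤ Lc I t' + Gc S t') ∧
    (∀ t1 : ℕ, t1 < t → Lc I t + Gc S t ≤ Lc I t1 + Gc S t1)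

/-- chain members containing the critical one -/
def LargeC {n : ℕ} (S I : Finset (Fin n)) (t r : Fin n) : Prop :=
  ∀ t' : ℕ, t < t' → t' ≤ r → Lc I t + Gc S t + 1 ≤ Lc I t' + Gc S t'

lemma rk_R2' {n : ℕ} {S D : Finset (Fin n)} {t q r : Fin n} (htq : t ≤ q) (hqr : q < r)
    (hq : q ∉ D) (hr : r ∉ D) (hD : ∀ i ∈ D, i < r) (hSD : ∀ i, t ≤ i → (i ∈ D ↔ i ∈ S))
    (I : Finset (Fin n)) (hI : SmallC S I t r ∨ LargeC S I t r) :
    rk (insert q D) I = rk (insert r D) I := by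
  refine le_antisymm (rk_R2 hqr hq hr I) ?_
  rw [Fin.lt_def] at hqr
  rw [Fin.le_def] at htq
  have hG : ∀ t' : ℕ, t ≤ t' → Gc D t' = Gc S t' := fun t' ht' =>
    Gc_congr (fun i hi => hSD i (by rw [Fin.le_def]; omega))
  obtain ⟨t', ht'⟩ := rk_att (insert q D) I
  rw [Gc_insert hq] at ht'
  have h1 := rk_le (insert r D) I t'
  rw [Gc_insert hr] at h1
  by_cases h2 : t' ≤ q
  · rw [if_pos h2] at ht'
    split_ifs at h1 <;> omega
  by_cases h3 : (r : ℕ) < t'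
  · rw [if_neg (by omega)] at ht' h1
    omega
  rw [if_neg h2] at ht'
  have hgt := hG t' (by omega)
  rcases hI with ⟨hrI, hI, -⟩ | hI
  · have h4 := rk_le (insert r D) I (r + 1)
    rw [Gc_zero (S := insert r D), Lc_succ, if_neg hrI] at h4
    · have := hI t' (by omega) (by omega)
      omega
    · intro i hi
      rcases Finset.mem_insert.1 hi with rfl | hi
      · omega
      · have := hD i hi; rw [Fin.lt_def] at this; omega
  · have h4 := rk_le (insert r D) I t
    rw [Gc_insert hr] at h4
    have := hI t' (by omega) (by omega)
    have := hG t le_rfl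
    split_ifs at h4 <;> omega

lemma rk_R3 {n : ℕ} {A A' F : Finset (Fin n)} {q : Fin n} (hAA : A ⊆ A')
    (hA : ∀ i ∈ A', i < q) (hF : ∀ i ∈ F, q ≤ i) (I : Finset (Fin n)) :
    rk (A' ∪ F) I + rk A I ≤ rk A' I + rk (A ∪ F) I := by
  have hd' : Disjoint A' F := Finset.disjoint_left.2 fun x hx hx' =>
    absurd (hA x hx) (not_lt.2 (hF x hx'))
  have hd : Disjoint A F := Finset.disjoint_of_subset_left hAA hd'
  obtain ⟨t1, h1⟩ := rk_att A' I
  obtain ⟨t2, h2⟩ := rk_att (A ∪ F) I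
  rw [Gc_union hd] at h2
  by_cases h : t2 ≤ (q : ℕ)
  · have h3 := rk_le (A' ∪ F) I t1
    rw [Gc_union hd'] at h3
    have h4 := rk_le A I t2
    have h5 : Gc F t2 = F.card := Gc_card fun i hi => by
      have := hF i hi; rw [Fin.le_def] at this; omega
    have := Gc_le_card F t1
    omega
  · have h3 := rk_le (A' ∪ F) I t2
    rw [Gc_union hd'] at h3
    have h4 : Gc A' t2 = 0 := Gc_zero fun i hi => by
      have := hA i hi; rw [Fin.lt_def] at this; omega
    have := rk_mono hAA I
    omega

lemma rk_R3' {n : ℕ} {A A' M : Finset (Fin n)} {t q r : Fin n} (htq : t ≤ q) (hqr : q < r)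
    (hAA : A ⊆ A') (hA : ∀ i ∈ A', i < q) (hM : ∀ i ∈ M, q < i ∧ i < r)
    (hAt : ∀ i, t ≤ i → (i ∈ A' ↔ i ∈ A))
    (I : Finset (Fin n)) (hI : SmallC (A ∪ M) I t r ∨ LargeC (A ∪ M) I t r) :
    rk (A' ∪ insert q M) I + rk A I = rk A' I + rk (A ∪ insert q M) I := by
  have hF : ∀ i ∈ insert q M, q ≤ i := by
    intro i hi
    rcases Finset.mem_insert.1 hi with rfl | hi
    · exact le_rfl
    · exact (hM i hi).1.le
  refine le_antisymm (rk_R3 hAA hA hF I) ?_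
  have hd' : Disjoint A' (insert q M) := Finset.disjoint_left.2 fun x hx hx' =>
    absurd (hA x hx) (not_lt.2 (hF x hx'))
  have hd : Disjoint A (insert q M) := Finset.disjoint_of_subset_left hAA hd'
  have hdM : Disjoint A M := Finset.disjoint_of_subset_right (Finset.subset_insert q M) hd
  have hqM : q ∉ M := fun h => lt_irrefl _ (hM q h).1
  have hG : ∀ t' : ℕ, t ≤ t' → Gc A' t' = Gc A t' := fun t' ht' =>
    Gc_congr (fun i hi => hAt i (by rw [Fin.le_def]; omega))
  rw [Fin.lt_def] at hqr
  rw [Fin.le_def] at htq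
  rcases hI with ⟨-, -, hI⟩ | hI
  · have h1 : rk A' I ≤ rk A I := by
      obtain ⟨t1, h1⟩ := rk_att A I
      by_cases ht : (t : ℕ) ≤ t1
      · have := rk_le A' I t1
        rw [hG t1 ht] at this
        omega
      · have h2 := rk_le A' I t
        have h3 := hI t1 (by omega)
        rw [hG t le_rfl] at h2
        rw [Gc_union hdM, Gc_union hdM] at h3
        have h4 : Gc M t = M.card := Gc_card fun i hi => by
          have := (hM i hi).1; rw [Fin.lt_def] at this; omega
        have h5 : Gc M t1 = M.card := Gc_card fun i hi => by
          have := (hM i hi).1; rw [Fin.lt_def] at this; omega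
        omega
    have h2 := rk_mono (Finset.union_subset_union_left (t := insert q M) hAA) I
    omega
  · have h1 : rk (A ∪ insert q M) I ≤ rk A I + (insert q M).card := by
      obtain ⟨t1, h1⟩ := rk_att A I
      have h2 := rk_le (A ∪ insert q M) I t1
      rw [Gc_union hd] at h2
      have := Gc_le_card (insert q M) t1
      omega
    have h2 : rk A' I + (insert q M).card ≤ rk (A' ∪ insert q M) I := by
      obtain ⟨t2, h2⟩ := rk_att (A' ∪ insert q M) I
      rw [Gc_union hd'] at h2
      by_cases h : t2 ≤ (q : ℕ)
      · have h5 : Gc (insert q M) t2 = (insert q M).card := Gc_card fun i hi => by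
          have := hF i hi; rw [Fin.le_def] at this; omega
        have := rk_le A' I t2
        omega
      · have hcard : (insert q M).card = M.card + 1 := Finset.card_insert_of_notMem hqM
        have h3 := rk_le A' I t
        rw [hG t le_rfl] at h3
        have h4 : Gc M t = M.card := Gc_card fun i hi => by
          have := (hM i hi).1; rw [Fin.lt_def] at this; omega
        have hAz : ∀ t' : ℕ, q ≤ t' → Gc A t' = 0 := fun t' ht' => Gc_zero fun i hi => by
          have := hA i (hAA hi); rw [Fin.lt_def] at this; omega
        have hMr : Gc M r = 0 := Gc_zero fun i hi => (hM i hi).2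
        rw [Gc_insert hqM, if_neg h] at h2
        by_cases htr : t2 ≤ (r : ℕ)
        · have h6 := hI t2 (by omega) htr
          rw [Gc_union hdM, Gc_union hdM, hAz t2 (by omega)] at h6
          omega
        · have h6 := hI r (by omega) le_rfl
          rw [Gc_union hdM, Gc_union hdM, hAz r (by omega)] at h6
          have := Lc_mono I (show (r : ℕ) ≤ t2 by omega)
          omega
    omega

/-- Either no member of the chain is critical, or there is a critical row `t`. -/
lemma chain_alt {n : ℕ} {S : Finset (Fin n)} {r : Fin n} (hS : ∀ i ∈ S, i < r)
    (J : ℕ → Finset (Fin n)) (hJ0 : J 0 = ∅) (hJm : ∀ m, J m ⊆ J (m + 1))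
    (hJs : ∀ m, ∃ A : Finset (Fin n), A.card ≤ 1 ∧ J (m + 1) = J m ∪ A) :
    (∀ m, r ∉ J m → ∀ t : ℕ, t < r → Lc (J m) r ≤ Lc (J m) t + Gc S t) ∨
    ∃ t : Fin n, t < r ∧ t ∉ S ∧ ∀ m, SmallC S (J m) t r ∨ LargeC S (J m) t r := by
  classical
  by_cases hviol : ∃ m, r ∉ J m ∧ ∃ t : ℕ, t < r ∧ Lc (J m) t + Gc S t < Lc (J m) r
  swap
  · left
    intro m hm t ht
    by_contra hcon
    exact hviol ⟨m, hm, t, ht, not_le.1 hcon⟩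
  right
  have hmono : Monotone J := monotone_nat_of_le_succ hJm
  obtain ⟨hr0, t0, ht0, hvt0⟩ := Nat.find_spec hviol
  have hmin := fun m hm => Nat.find_min hviol (m := m) hm
  set m0 := Nat.find hviol with hm0
  have hm0pos : m0 ≠ 0 := by
    intro h
    rw [h, hJ0] at hvt0
    simp [Lc] at hvt0
  obtain ⟨m1, hm1⟩ := Nat.exists_eq_succ_of_ne_zero hm0pos
  set T := (Finset.range r).filter fun t => Lc (J m0) t + Gc S t < Lc (J m0) r with hT
  have hTne : T.Nonempty := ⟨t0, by rw [hT, Finset.mem_filter, Finset.mem_range]; exact ⟨ht0, hvt0⟩⟩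
  have htm := T.max'_mem hTne
  have hmax : ∀ x ∈ T, x ≤ T.max' hTne := fun x hx => T.le_max' x hx
  set t := T.max' hTne with ht
  rw [hT, Finset.mem_filter, Finset.mem_range] at htm
  have habove : ∀ t' : ℕ, t < t' → t' ≤ r → Lc (J m0) r ≤ Lc (J m0) t' + Gc S t' := by
    intro t' h1 h2
    by_contra hcon
    have hne : t' ≠ r := by rintro rfl; omega
    have := hmax t' (by
      rw [hT, Finset.mem_filter, Finset.mem_range]
      exact ⟨by omega, by omega⟩)
    omega
  let tf : Fin n := ⟨t, htm.1.trans r.2⟩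
  refine ⟨tf, htm.1, ?_, ?_⟩
  · intro htS
    have h1 := habove (t + 1) (by omega) (by omega)
    have h2 : Lc (J m0) (t + 1) ≤ Lc (J m0) t + 1 := by
      have := Lc_succ (J m0) tf
      simp only [tf] at this
      split_ifs at this <;> omega
    have h3 := Lc_succ S tf
    rw [if_pos htS] at h3
    simp only [tf] at h3
    have h4 := LG S t
    have h5 := LG S (t + 1)
    omega
  · intro m
    by_cases hm : m ≤ m0
    · left
      have hsub := hmono hm
      refine ⟨fun h => hr0 (hsub h), ?_, ?_⟩
      · intro t' h1 h2
        have := habove t' h1 h2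
        have := Lc_diff hsub h2
        omega
      · intro t1 h1
        simp only [tf] at h1 ⊢
        have h2 := Lc_diff hsub h1.le
        have h3 : Lc (J m1) r ≤ Lc (J m1) t1 + Gc S t1 := by
          by_contra hcon
          refine hmin m1 (by omega) ⟨fun h => hr0 ?_, t1, by omega, by omega⟩
          exact hmono (show m1 ≤ m0 by omega) h
        have h4 := Lc_sub (hmono (show m1 ≤ m0 by omega)) t1
        have h5 : Lc (J m0) r ≤ Lc (J m1) r + 1 := by
          obtain ⟨A, hA1, hA2⟩ := hJs m1
          rw [hm1, Nat.succ_eq_add_one, hA2]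
          have hb : Lc (J m1 ∪ A) r ≤ Lc (J m1) r + A.card := by
            unfold Lc
            rw [Finset.filter_union]
            refine (Finset.card_union_le _ _).trans ?_
            have := Finset.card_filter_le A (fun i : Fin n => (i : ℕ) < r)
            omega
          omega
        omega
    · right
      have hsub := hmono (show m0 ≤ m by omega)
      intro t' h1 h2
      simp only [tf] at h1 ⊢
      have h3 := habove t' h1 h2
      have h4 := Lc_diff hsub h1.le
      omega

/-! ### `thetaCol` is a rank function -/

/-- auxiliary minimum over all cuts of a list -/
def Mcut {α : Type*} (D I : α → Bool) : List α → ℕ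
  | [] => 0
  | x :: l => min ((x :: l).countP D) ((if I x then 1 else 0) + Mcut D I l)

lemma Mcut_le {α : Type*} (D I : α → Bool) (l : List α) : Mcut D I l ≤ l.countP D := by
  cases l with
  | nil => simp [Mcut]
  | cons x l => exact min_le_left _ _

/-- the parenthesis word of a list -/
def wordOf {α : Type*} (D I : α → Bool) (l : List α) : List Bool :=
  l.filterMap fun i =>
    if D i then (if I i then none else some false)
    else (if I i then some true else none)

lemma matched_eq {α : Type*} (D I : α → Bool) (l : List α) : ∀ o : ℕ,
    matchedPairsAux (wordOf D I l) o + l.countP (fun x => D x && I x) =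
      min (l.countP D) (o + Mcut D I l) := by
  induction l with
  | nil => intro o; simp [wordOf, matchedPairsAux, Mcut]
  | cons x l ih =>
    intro o
    have hM := Mcut_le D I l
    cases hD : D x <;> cases hI : I x
    · have := ih o
      simp only [wordOf, Mcut, List.filterMap_cons, List.countP_cons, hD, hI] at *
      simp at *
      omega
    · have := ih (o + 1)
      simp only [wordOf, Mcut, List.filterMap_cons, List.countP_cons, hD, hI] at *
      simp [matchedPairsAux] at *
      omega
    · cases o with
      | zero =>
        have := ih 0
        simp only [wordOf, Mcut, List.filterMap_cons, List.countP_cons, hD, hI] at *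
        simp [matchedPairsAux] at *
        omega
      | succ o =>
        have := ih o
        simp only [wordOf, Mcut, List.filterMap_cons, List.countP_cons, hD, hI] at *
        simp [matchedPairsAux] at *
        omega
    · have := ih o
      simp only [wordOf, Mcut, List.filterMap_cons, List.countP_cons, hD, hI] at *
      simp at *
      omega

lemma Mcut_cut_le {n : ℕ} (D I : Fin n → Bool) (t : ℕ) (l : List (Fin n))
    (hl : l.Pairwise (· < ·)) :
    Mcut D I l ≤ l.countP (fun x => I x && decide ((x : ℕ) < t)) +
      l.countP (fun x => D x && decide (t ≤ (x : ℕ))) := by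
  induction l with
  | nil => simp [Mcut]
  | cons x l ih =>
    rw [List.pairwise_cons] at hl
    by_cases h : t ≤ (x : ℕ)
    · have h1 : (x :: l).countP (fun x => D x && decide (t ≤ (x : ℕ))) = (x :: l).countP D := by
        apply List.countP_congr
        intro y hy
        have : t ≤ (y : ℕ) := by
          rcases List.mem_cons.1 hy with rfl | hy
          · exact h
          · have := hl.1 y hy
            rw [Fin.lt_def] at this; omega
        simp [this]
      rw [h1]
      have := Mcut_le D I (x :: l)
      omega
    · have := ih hl.2
      have hlt : (x : ℕ) < t := by omega
      rw [List.countP_cons, List.countP_cons]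
      simp only [Mcut, h, hlt, decide_true, decide_false, Bool.and_true, Bool.and_false]
      have h2 := min_le_right (List.countP D (x :: l)) ((if I x = true then 1 else 0) + Mcut D I l)
      simp at *
      omega

lemma Mcut_att {n : ℕ} (D I : Fin n → Bool) (l : List (Fin n))
    (hl : l.Pairwise (· < ·)) : ∃ t : ℕ,
    l.countP (fun x => I x && decide ((x : ℕ) < t)) +
      l.countP (fun x => D x && decide (t ≤ (x : ℕ))) ≤ Mcut D I l := by
  induction l with
  | nil => simp [Mcut]
  | cons x l ih =>
    rw [List.pairwise_cons] at hl
    obtain ⟨t, ht⟩ := ih hl.2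
    by_cases hmin : (x :: l).countP D ≤ (if I x then 1 else 0) + Mcut D I l
    · refine ⟨0, ?_⟩
      rw [Mcut, min_eq_left hmin]
      simp
    · refine ⟨max t (x + 1), ?_⟩
      rw [Mcut, min_eq_right (not_le.1 hmin).le]
      have e1 : l.countP (fun y => I y && decide ((y : ℕ) < max t (x + 1))) =
          l.countP (fun y => I y && decide ((y : ℕ) < t)) := by
        apply List.countP_congr
        intro y hy
        have := hl.1 y hy
        rw [Fin.lt_def] at this
        have h3 : ((y : ℕ) < max t (x + 1)) ↔ ((y : ℕ) < t) := by omega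
        simp only [h3]
      have e2 : l.countP (fun y => D y && decide (max t (x + 1) ≤ (y : ℕ))) =
          l.countP (fun y => D y && decide (t ≤ (y : ℕ))) := by
        apply List.countP_congr
        intro y hy
        have := hl.1 y hy
        rw [Fin.lt_def] at this
        have h3 : (max t (x + 1) ≤ (y : ℕ)) ↔ (t ≤ (y : ℕ)) := by omega
        simp only [h3]
      rw [List.countP_cons, List.countP_cons, e1, e2]
      have h4 : (x : ℕ) < max t (x + 1) := by omega
      have h5 : ¬ (max t (x + 1) ≤ (x : ℕ)) := by omega
      simp only [h4, h5, decide_true, decide_false, Bool.and_true, Bool.and_false]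
      simp
      omega

lemma countP_finRange {n : ℕ} (p : Fin n → Bool) :
    (List.finRange n).countP p = (Finset.univ.filter fun i => p i = true).card := by
  rw [List.countP_eq_length_filter]
  rw [← List.toFinset_card_of_nodup ((List.nodup_finRange n).filter _)]
  congr 1
  ext x
  simp

lemma thetaCol_eq {n : ℕ} (D : Finset (Fin n × Fin n)) (j : Fin n) (I : Finset (Fin n)) :
    thetaCol D j I = rk (colSet D j) I := by
  set d : Fin n → Bool := fun i => decide ((i, j) ∈ D) with hd
  set e : Fin n → Bool := fun i => decide (i ∈ I) with he
  have hw : colWord D j I = wordOf d e (List.finRange n) := by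
    unfold colWord wordOf
    simp [hd, he]
  have h1 := matched_eq d e (List.finRange n) 0
  have hM := Mcut_le d e (List.finRange n)
  rw [zero_add, min_eq_right hM] at h1
  have h2 : (colSet D j ∩ I).card = (List.finRange n).countP (fun x => d x && e x) := by
    rw [countP_finRange]
    congr 1
    ext x
    simp [colSet, hd, he]
  have h3 : ∀ t, (List.finRange n).countP (fun x => e x && decide ((x : ℕ) < t)) = Lc I t := by
    intro t
    rw [countP_finRange]
    unfold Lc
    congr 1
    ext x
    simp [he]
  have h4 : ∀ t, (List.finRange n).countP (fun x => d x && decide (t ≤ (x : ℕ))) =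
      Gc (colSet D j) t := by
    intro t
    rw [countP_finRange]
    unfold Gc
    congr 1
    ext x
    simp [hd, colSet]
  have hsort : (List.finRange n).Pairwise (· < ·) := List.pairwise_lt_finRange n
  unfold thetaCol matchedPairs
  rw [hw, h2, h1]
  apply le_antisymm
  · obtain ⟨t, ht⟩ := rk_att (colSet D j) I
    rw [ht, ← h3, ← h4]
    exact Mcut_cut_le d e t _ hsort
  · obtain ⟨t, ht⟩ := Mcut_att d e _ hsort
    rw [h3, h4] at ht
    exact (rk_le _ _ t).trans ht

lemma card_eq_sum {n : ℕ} (D : Finset (Fin n × Fin n)) :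
    D.card = ∑ j, (colSet D j).card := by
  rw [Finset.card_eq_sum_card_fiberwise (f := Prod.snd) (t := Finset.univ) (by simp)]
  refine Finset.sum_congr rfl (fun j _ => ?_)
  refine Finset.card_bij' (fun p _ => p.1) (fun i _ => (i, j)) ?_ ?_ ?_ ?_
  · rintro ⟨a, b⟩ h
    simp [colSet] at h ⊢
    rw [← h.2]; exact h.1
  · intro a h
    simpa [colSet] using h
  · rintro ⟨a, b⟩ h
    simp at h
    simp [h.2]
  · intro a h
    rfl

/-! ### Columns of Rothe diagrams under transition -/

lemma mem_col {n : ℕ} (w : Equiv.Perm (Fin n)) (i j : Fin n) :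
    i ∈ colSet (rothe w) j ↔ j < w i ∧ i < w⁻¹ j := by
  simp [colSet, rothe]

lemma mem_col_v {n : ℕ} (w : Equiv.Perm (Fin n)) (r s i p : Fin n) :
    i ∈ colSet (rothe (w * Equiv.swap r s)) (w p) ↔
      w p < w (Equiv.swap r s i) ∧ i < Equiv.swap r s p := by
  rw [mem_col]
  simp

lemma mem_col_v' {n : ℕ} (w : Equiv.Perm (Fin n)) (q r s i p : Fin n) :
    i ∈ colSet (rothe (w * Equiv.swap r s * Equiv.swap q r)) (w p) ↔
      w p < w (Equiv.swap r s (Equiv.swap q r i)) ∧ i < Equiv.swap q r (Equiv.swap r s p) := by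
  rw [mem_col]
  simp

lemma mem_col_w {n : ℕ} (w : Equiv.Perm (Fin n)) (i p : Fin n) :
    i ∈ colSet (rothe w) (w p) ↔ w p < w i ∧ i < p := by
  rw [mem_col]
  simp

/-- The data of a transition step. -/
structure TransData {n : ℕ} (w : Equiv.Perm (Fin n)) (r s : Fin n) : Prop where
  hrs : r < s
  hw : w s < w r
  h1 : ∀ a b, r < a → a < b → w a < w b
  h2 : ∀ b, s < b → w r < w b

/-- column `w s` of the diagram without its box in row `r` -/
def Sset {n : ℕ} (w : Equiv.Perm (Fin n)) (r s : Fin n) : Finset (Fin n) :=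
  Finset.univ.filter fun i => i < r ∧ w s < w i

/-- elements below `q` in column with value `x` -/
def Aset {n : ℕ} (w : Equiv.Perm (Fin n)) (q x : Fin n) : Finset (Fin n) :=
  Finset.univ.filter fun i => i < q ∧ w x < w i

/-- middle part -/
def Mset {n : ℕ} (w : Equiv.Perm (Fin n)) (q r s : Fin n) : Finset (Fin n) :=
  Finset.univ.filter fun i => q < i ∧ i < r ∧ w s < w i

lemma col_w_s {n : ℕ} {w : Equiv.Perm (Fin n)} {r s : Fin n} (T : TransData w r s) :
    colSet (rothe w) (w s) = insert r (Sset w r s) := by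
  obtain ⟨hrs, hw, h1, h2⟩ := T
  ext i
  rw [mem_col_w]
  simp only [Sset, Finset.mem_insert, Finset.mem_filter, Finset.mem_univ, true_and]
  constructor
  · rintro ⟨a, b⟩
    rcases lt_trichotomy i r with h | h | h
    · exact Or.inr ⟨h, a⟩
    · exact Or.inl h
    · exact absurd a (lt_asymm (h1 i s h b))
  · rintro (rfl | ⟨a, b⟩)
    · exact ⟨hw, hrs⟩
    · exact ⟨b, a.trans hrs⟩

lemma col_v_s {n : ℕ} {w : Equiv.Perm (Fin n)} {r s : Fin n} (T : TransData w r s) :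
    colSet (rothe (w * Equiv.swap r s)) (w s) = Sset w r s := by
  obtain ⟨hrs, hw, h1, h2⟩ := T
  ext i
  rw [mem_col_v, Equiv.swap_apply_right]
  simp only [Sset, Finset.mem_filter, Finset.mem_univ, true_and]
  constructor
  · rintro ⟨a, b⟩
    rw [Equiv.swap_apply_of_ne_of_ne b.ne (b.trans hrs).ne] at a
    exact ⟨b, a⟩
  · rintro ⟨b, a⟩
    rw [Equiv.swap_apply_of_ne_of_ne b.ne (b.trans hrs).ne]
    exact ⟨a, b⟩

lemma col_v_other {n : ℕ} {w : Equiv.Perm (Fin n)} {r s : Fin n} (T : TransData w r s) {p : Fin n}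
    (hp : p ≠ s) :
    colSet (rothe (w * Equiv.swap r s)) (w p) = colSet (rothe w) (w p) := by
  obtain ⟨hrs, hw, h1, h2⟩ := T
  ext i
  rw [mem_col_v, mem_col_w]
  have h3 := h1 i s
  have h4 := h1 p s
  have h5 := h2 p
  have h6 := h1 i p
  have h7 : w i = w p → i = p := fun h => w.injective h
  rcases swap_lt_case r s p with ⟨h, h'⟩ | ⟨h, h'⟩ | ⟨h, h2', h'⟩ <;>
  rcases swap_lt_case r s i with ⟨g, g'⟩ | ⟨g, g'⟩ | ⟨g, g2', g'⟩ <;>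
  rw [h', g'] <;> grind

lemma col_v'_q {n : ℕ} {w : Equiv.Perm (Fin n)} {q r s : Fin n} (T : TransData w r s)
    (hqr : q < r) (hqs : w q < w s) (hc : ∀ c, q < c → c < r → w c < w q ∨ w s < w c) :
    colSet (rothe (w * Equiv.swap r s * Equiv.swap q r)) (w q) =
      Aset w q q ∪ insert q (Mset w q r s) := by
  obtain ⟨hrs, hw, h1, h2⟩ := T
  ext i
  rw [mem_col_v', Equiv.swap_apply_of_ne_of_ne hqr.ne (hqr.trans hrs).ne, Equiv.swap_apply_left]
  simp only [Aset, Mset, Finset.mem_union, Finset.mem_insert, Finset.mem_filter, Finset.mem_univ,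
    true_and]
  have h3 := hc i
  rcases swap_lt_case q r i with ⟨g, g'⟩ | ⟨g, g'⟩ | ⟨g, g2', g'⟩
  · rw [g', Equiv.swap_apply_left]; grind
  · rw [g', Equiv.swap_apply_of_ne_of_ne hqr.ne (hqr.trans hrs).ne]; grind
  · rw [g']
    rcases swap_lt_case r s i with ⟨k, k'⟩ | ⟨k, k'⟩ | ⟨k, k2', k'⟩
    · exact absurd k g2'
    · rw [k']; grind
    · rw [k']; grind

lemma col_w_q {n : ℕ} {w : Equiv.Perm (Fin n)} {q : Fin n} :
    colSet (rothe w) (w q) = Aset w q q := by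
  ext i
  rw [mem_col_w]
  simp [Aset, and_comm]

lemma col_v'_s {n : ℕ} {w : Equiv.Perm (Fin n)} {q r s : Fin n} (T : TransData w r s)
    (hqr : q < r) :
    colSet (rothe (w * Equiv.swap r s * Equiv.swap q r)) (w s) = Aset w q s := by
  obtain ⟨hrs, hw, h1, h2⟩ := T
  ext i
  rw [mem_col_v', Equiv.swap_apply_right, Equiv.swap_apply_right]
  simp only [Aset, Finset.mem_filter, Finset.mem_univ, true_and]
  by_cases hi : i < q
  · rw [Equiv.swap_apply_of_ne_of_ne hi.ne (hi.trans hqr).ne,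
      Equiv.swap_apply_of_ne_of_ne (hi.trans hqr).ne ((hi.trans hqr).trans hrs).ne]
    simp [hi]
  · simp [hi]

lemma Sset_eq {n : ℕ} {w : Equiv.Perm (Fin n)} {q r s : Fin n}
    (hqr : q < r) (hqs : w q < w s) : Sset w r s = Aset w q s ∪ Mset w q r s := by
  ext i
  simp only [Aset, Mset, Sset, Finset.mem_union, Finset.mem_filter, Finset.mem_univ, true_and]
  grind

lemma col_v'_other {n : ℕ} {w : Equiv.Perm (Fin n)} {q r s p : Fin n} (T : TransData w r s)
    (hqr : q < r) (hqs : w q < w s) (hc : ∀ c, q < c → c < r → w c < w q ∨ w s < w c)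
    (hpq : p ≠ q) (hps : p ≠ s) :
    colSet (rothe (w * Equiv.swap r s * Equiv.swap q r)) (w p) = colSet (rothe w) (w p) ∨
    (w q < w p ∧ w p < w s ∧ colSet (rothe w) (w p) = insert r (Sset w r p) ∧
      colSet (rothe (w * Equiv.swap r s * Equiv.swap q r)) (w p) = insert q (Sset w r p)) := by
  obtain ⟨hrs, hw, h1, h2⟩ := T
  have hqsn : q ≠ s := (hqr.trans hrs).ne
  have hval : ∀ i, (i = q ∧ Equiv.swap r s (Equiv.swap q r i) = s) ∨
      (i = r ∧ Equiv.swap r s (Equiv.swap q r i) = q) ∨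
      (i = s ∧ Equiv.swap r s (Equiv.swap q r i) = r) ∨
      (i ≠ q ∧ i ≠ r ∧ i ≠ s ∧ Equiv.swap r s (Equiv.swap q r i) = i) := by
    intro i
    rcases swap_lt_case q r i with ⟨g, g'⟩ | ⟨g, g'⟩ | ⟨g, g2', g'⟩
    · rw [g', Equiv.swap_apply_left]; exact Or.inl ⟨g, rfl⟩
    · rw [g', Equiv.swap_apply_of_ne_of_ne hqr.ne hqsn]; exact Or.inr (Or.inl ⟨g, rfl⟩)
    · rw [g']
      rcases swap_lt_case r s i with ⟨k, k'⟩ | ⟨k, k'⟩ | ⟨k, k2', k'⟩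
      · exact absurd k g2'
      · rw [k']; exact Or.inr (Or.inr (Or.inl ⟨k, rfl⟩))
      · rw [k']; exact Or.inr (Or.inr (Or.inr ⟨g, k, k2', rfl⟩))
  have hpos : (p = r ∧ Equiv.swap q r (Equiv.swap r s p) = s) ∨
      (p ≠ r ∧ Equiv.swap q r (Equiv.swap r s p) = p) := by
    by_cases hpr : p = r
    · left
      rw [hpr, Equiv.swap_apply_left, Equiv.swap_apply_of_ne_of_ne hqsn.symm hrs.ne']
      exact ⟨rfl, rfl⟩
    · right
      rw [Equiv.swap_apply_of_ne_of_ne hpr hps, Equiv.swap_apply_of_ne_of_ne hpq hpr]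
      exact ⟨hpr, rfl⟩
  have hinj : ∀ a b, w a = w b → a = b := fun a b h => w.injective h
  by_cases hmid : r < p ∧ w q < w p ∧ w p < w s
  · right
    obtain ⟨m1, m2, m3⟩ := hmid
    refine ⟨m2, m3, ?_, ?_⟩
    · ext i
      rw [mem_col_w]
      simp only [Sset, Finset.mem_insert, Finset.mem_filter, Finset.mem_univ, true_and]
      have h3 := h1 i p
      grind
    · ext i
      rw [mem_col_v']
      simp only [Sset, Finset.mem_insert, Finset.mem_filter, Finset.mem_univ, true_and]
      have h3 := h1 i p
      have h5 := h2 p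
      rcases hpos with ⟨k, k'⟩ | ⟨k, k'⟩ <;> rw [k'] <;>
      rcases hval i with ⟨g, g'⟩ | ⟨g, g'⟩ | ⟨g, g'⟩ | ⟨g, g2', g3', g'⟩ <;> rw [g'] <;> grind
  · left
    ext i
    rw [mem_col_v', mem_col_w]
    have h3 := h1 i s
    have h4 := h1 p s
    have h5 := h2 p
    have h6 := h1 i p
    have h7 := hinj i p
    have h8 := hc p
    have h9 := hinj p q
    have h10 := hinj p s
    rcases hpos with ⟨k, k'⟩ | ⟨k, k'⟩ <;> rw [k'] <;>
    rcases hval i with ⟨g, g'⟩ | ⟨g, g'⟩ | ⟨g, g'⟩ | ⟨g, g2', g3', g'⟩ <;> rw [g'] <;> grind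

/-! ### Theta under transition -/

lemma theta_sum {n : ℕ} (w : Equiv.Perm (Fin n)) (D : Finset (Fin n × Fin n))
    (I : Finset (Fin n)) : theta D I = ∑ p, rk (colSet D (w p)) I := by
  unfold theta
  simp only [thetaCol_eq]
  exact (Equiv.sum_comp w (fun j => rk (colSet D j) I)).symm

lemma theta_univ {n : ℕ} (D : Finset (Fin n × Fin n)) : theta D Finset.univ = D.card := by
  unfold theta
  simp only [thetaCol_eq, rk_univ]
  exact (card_eq_sum D).symm

lemma Sset_lt {n : ℕ} {w : Equiv.Perm (Fin n)} {r s : Fin n} : ∀ i ∈ Sset w r s, i < r := by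
  intro i hi
  simp only [Sset, Finset.mem_filter, Finset.mem_univ, true_and] at hi
  exact hi.1

lemma theta_v_aux {n : ℕ} {w : Equiv.Perm (Fin n)} {r s : Fin n} (T : TransData w r s)
    (I : Finset (Fin n)) :
    theta (rothe (w * Equiv.swap r s)) I + rk (insert r (Sset w r s)) I =
      theta (rothe w) I + rk (Sset w r s) I := by
  rw [theta_sum w, theta_sum w, ← Finset.add_sum_erase _ _ (Finset.mem_univ s),
    ← Finset.add_sum_erase _ _ (Finset.mem_univ s), col_w_s T, col_v_s T]
  rw [Finset.sum_congr rfl (fun p hp => by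
    rw [col_v_other T (Finset.ne_of_mem_erase hp)])]
  ring

lemma theta_v_le {n : ℕ} {w : Equiv.Perm (Fin n)} {r s : Fin n} (T : TransData w r s)
    (I : Finset (Fin n)) :
    theta (rothe (w * Equiv.swap r s)) I + (if r ∈ I then 1 else 0) ≤ theta (rothe w) I := by
  have h1 := theta_v_aux T I
  have h2 := rk_R1 (Sset_lt (w := w) (r := r) (s := s)) I
  omega

lemma theta_v_eq {n : ℕ} {w : Equiv.Perm (Fin n)} {r s : Fin n} (T : TransData w r s)
    (I : Finset (Fin n))
    (h : r ∉ I → ∀ t : ℕ, t < r → Lc I r ≤ Lc I t + Gc (Sset w r s) t) :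
    theta (rothe (w * Equiv.swap r s)) I + (if r ∈ I then 1 else 0) = theta (rothe w) I := by
  have h1 := theta_v_aux T I
  have h2 := rk_R1' (Sset_lt (w := w) (r := r) (s := s)) I h
  omega

lemma card_v {n : ℕ} {w : Equiv.Perm (Fin n)} {r s : Fin n} (T : TransData w r s) :
    (rothe (w * Equiv.swap r s)).card + 1 = (rothe w).card := by
  have := theta_v_eq T Finset.univ (by simp)
  simpa [theta_univ] using this

section vprime
variable {n : ℕ} {w : Equiv.Perm (Fin n)} {q r s : Fin n}

lemma Aset_sub (hqs : w q < w s) : Aset w q s ⊆ Aset w q q := by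
  intro i
  simp only [Aset, Finset.mem_filter, Finset.mem_univ, true_and]
  exact fun ⟨a, b⟩ => ⟨a, hqs.trans b⟩

lemma Aset_lt {x : Fin n} : ∀ i ∈ Aset w q x, i < q := by
  intro i hi
  simp only [Aset, Finset.mem_filter, Finset.mem_univ, true_and] at hi
  exact hi.1

lemma Mset_lt : ∀ i ∈ Mset w q r s, q < i ∧ i < r := by
  intro i hi
  simp only [Mset, Finset.mem_filter, Finset.mem_univ, true_and] at hi
  exact ⟨hi.1, hi.2.1⟩

lemma not_mem_Sset_q {p : Fin n} (h : w q < w p) : q ∉ Sset w r p := by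
  simp only [Sset, Finset.mem_filter, Finset.mem_univ, true_and]
  exact fun h' => lt_asymm h h'.2

lemma not_mem_Sset_r {p : Fin n} : r ∉ Sset w r p := fun h => lt_irrefl _ (Sset_lt r h)

lemma pair_eq (hqr : q < r) (hqs : w q < w s) :
    Aset w q s ∪ insert q (Mset w q r s) = insert q (Sset w r s) := by
  rw [Sset_eq hqr hqs, Finset.union_insert]

/-- comparison of sums with the two special columns split off -/
lemma theta_v'_split (T : TransData w r s)
    (hqr : q < r) (hqs : w q < w s) (hc : ∀ c, q < c → c < r → w c < w q ∨ w s < w c) :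
    ∃ E E' : Finset (Fin n) → ℕ,
      (∀ I, theta (rothe w) I = rk (Aset w q q) I + rk (insert r (Sset w r s)) I + E I) ∧
      (∀ I, theta (rothe (w * Equiv.swap r s * Equiv.swap q r)) I =
        rk (Aset w q q ∪ insert q (Mset w q r s)) I + rk (Aset w q s) I + E' I) ∧
      (E = fun I => ∑ p ∈ (Finset.univ.erase q).erase s, rk (colSet (rothe w) (w p)) I) ∧
      (E' = fun I => ∑ p ∈ (Finset.univ.erase q).erase s,
        rk (colSet (rothe (w * Equiv.swap r s * Equiv.swap q r)) (w p)) I) := by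
  have hsq : s ∈ (Finset.univ : Finset (Fin n)).erase q := by
    simp only [Finset.mem_erase, Finset.mem_univ, and_true]
    exact (hqr.trans T.hrs).ne'
  refine ⟨_, _, ?_, ?_, rfl, rfl⟩
  · intro I
    rw [theta_sum w, ← Finset.add_sum_erase _ _ (Finset.mem_univ q),
      ← Finset.add_sum_erase _ _ hsq, col_w_s T, col_w_q]
    ring
  · intro I
    rw [theta_sum w, ← Finset.add_sum_erase _ _ (Finset.mem_univ q),
      ← Finset.add_sum_erase _ _ hsq, col_v'_s T hqr, col_v'_q T hqr hqs hc]
    ring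

lemma theta_v'_le (T : TransData w r s)
    (hqr : q < r) (hqs : w q < w s) (hc : ∀ c, q < c → c < r → w c < w q ∨ w s < w c)
    (I : Finset (Fin n)) :
    theta (rothe (w * Equiv.swap r s * Equiv.swap q r)) I ≤ theta (rothe w) I := by
  obtain ⟨E, E', h1, h2, hE, hE'⟩ := theta_v'_split T hqr hqs hc
  have h3 : E' I ≤ E I := by
    rw [hE, hE']
    apply Finset.sum_le_sum
    intro p hp
    simp only [Finset.mem_erase, Finset.mem_univ, and_true] at hp
    rcases col_v'_other T hqr hqs hc hp.2 hp.1 with h | ⟨a, b, c, d⟩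
    · rw [h]
    · rw [c, d]
      exact rk_R2 hqr (not_mem_Sset_q a) not_mem_Sset_r I
  have h4 := rk_R3 (Aset_sub (w := w) hqs) Aset_lt (F := insert q (Mset w q r s)) (by
    intro i hi
    rcases Finset.mem_insert.1 hi with rfl | hi
    · exact le_rfl
    · exact (Mset_lt i hi).1.le) I
  rw [pair_eq hqr hqs] at h4
  have h5 := rk_R2 hqr (not_mem_Sset_q hqs) (not_mem_Sset_r (w := w) (p := s)) I
  rw [h1, h2]
  omega

lemma theta_v'_eq (T : TransData w r s) {t : Fin n} (htq : t ≤ q)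
    (hqr : q < r) (hqs : w q < w s) (hc : ∀ c, q < c → c < r → w c < w q ∨ w s < w c)
    (hmax : ∀ c, t ≤ c → c < r → w c ≤ w q ∨ w s < w c)
    (I : Finset (Fin n)) (hI : SmallC (Sset w r s) I t r ∨ LargeC (Sset w r s) I t r) :
    theta (rothe (w * Equiv.swap r s * Equiv.swap q r)) I = theta (rothe w) I := by
  obtain ⟨E, E', h1, h2, hE, hE'⟩ := theta_v'_split T hqr hqs hc
  have h3 : E' I = E I := by
    rw [hE, hE']
    apply Finset.sum_congr rfl
    intro p hp
    simp only [Finset.mem_erase, Finset.mem_univ, and_true] at hp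
    rcases col_v'_other T hqr hqs hc hp.2 hp.1 with h | ⟨a, b, c, d⟩
    · rw [h]
    · rw [c, d]
      refine rk_R2' htq hqr (not_mem_Sset_q a) not_mem_Sset_r Sset_lt ?_ I hI
      intro i hi
      simp only [Sset, Finset.mem_filter, Finset.mem_univ, true_and]
      have := hmax i hi
      grind
  have hI' := hI
  rw [Sset_eq hqr hqs] at hI'
  have h4 := rk_R3' htq hqr (Aset_sub (w := w) hqs) Aset_lt Mset_lt (by
    intro i hi
    simp only [Aset, Finset.mem_filter, Finset.mem_univ, true_and]
    have := hmax i hi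
    grind) I hI'
  rw [pair_eq hqr hqs] at h4
  have h5 := rk_R2' htq hqr (not_mem_Sset_q hqs) (not_mem_Sset_r (w := w) (p := s)) Sset_lt
    (fun i hi => Iff.rfl) I hI
  rw [h1, h2]
  omega

lemma card_v' (T : TransData w r s)
    (hqr : q < r) (hqs : w q < w s) (hc : ∀ c, q < c → c < r → w c < w q ∨ w s < w c) :
    (rothe (w * Equiv.swap r s * Equiv.swap q r)).card = (rothe w).card := by
  obtain ⟨E, E', h1, h2, hE, hE'⟩ := theta_v'_split T hqr hqs hc
  rw [← theta_univ, ← theta_univ, h1, h2]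
  have h3 : E' Finset.univ = E Finset.univ := by
    rw [hE, hE']
    apply Finset.sum_congr rfl
    intro p hp
    simp only [Finset.mem_erase, Finset.mem_univ, and_true] at hp
    rcases col_v'_other T hqr hqs hc hp.2 hp.1 with h | ⟨a, b, c, d⟩
    · rw [h]
    · rw [c, d, rk_univ, rk_univ, Finset.card_insert_of_notMem (not_mem_Sset_q a),
        Finset.card_insert_of_notMem not_mem_Sset_r]
  rw [h3]
  simp only [rk_univ]
  have hqM : q ∉ Mset w q r s := fun h => lt_irrefl _ (Mset_lt q h).1
  rw [Finset.card_insert_of_notMem not_mem_Sset_r, Sset_eq hqr hqs,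
    Finset.card_union_of_disjoint, Finset.card_union_of_disjoint,
    Finset.card_insert_of_notMem hqM]
  · omega
  · rw [Finset.disjoint_left]
    intro x hx hx'
    exact lt_asymm (Aset_lt x hx) (Mset_lt x hx').1
  · rw [Finset.disjoint_left]
    intro x hx hx'
    rcases Finset.mem_insert.1 hx' with rfl | hx'
    · exact lt_irrefl _ (Aset_lt x hx)
    · exact lt_asymm (Aset_lt x hx) (Mset_lt x hx').1

end vprime

/-! ### The main induction -/

lemma cov_iff {n : ℕ} {w : Equiv.Perm (Fin n)} {q r s : Fin n} (T : TransData w r s) :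
    cov (w * Equiv.swap r s) q r ↔
      q < r ∧ w q < w s ∧ ∀ c, q < c → c < r → w c < w q ∨ w s < w c := by
  have hs : ∀ c, c < r → (w * Equiv.swap r s) c = w c := fun c hc => by
    rw [Equiv.Perm.mul_apply, Equiv.swap_apply_of_ne_of_ne hc.ne (hc.trans T.hrs).ne]
  have hr : (w * Equiv.swap r s) r = w s := by simp
  unfold cov
  rw [hr]
  constructor
  · rintro ⟨a, b, c⟩
    rw [hs q a] at b c
    exact ⟨a, b, fun x hx hx' => by have := c x hx hx'; rwa [hs x hx'] at this⟩
  · rintro ⟨a, b, c⟩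
    rw [hs q a]
    exact ⟨a, b, fun x hx hxr => by rw [hs x hxr]; exact c x hx hxr⟩

/-- chain of initial segments for an ordering -/
def Jset {n : ℕ} (σ : Equiv.Perm (Fin n)) (m : ℕ) : Finset (Fin n) :=
  Finset.univ.filter fun x => (σ x : ℕ) < m

/-- The inductive statement -/
structure Good {n : ℕ} (w : Equiv.Perm (Fin n)) (f : MvPolynomial (Fin n) ℤ) : Prop where
  nonneg : ∀ d, 0 ≤ f.coeff d
  card : ∀ d, f.coeff d ≠ 0 → ∑ i, d i = (rothe w).card
  le : ∀ d, f.coeff d ≠ 0 → ∀ I : Finset (Fin n), ∑ i ∈ I, d i ≤ theta (rothe w) I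
  ex : ∀ σ : Equiv.Perm (Fin n), ∃ d, f.coeff d ≠ 0 ∧
    ∀ m, ∑ i ∈ Jset σ m, d i = theta (rothe w) (Jset σ m)

lemma rk_empty {n : ℕ} (I : Finset (Fin n)) : rk ∅ I = 0 := by
  have := rk_le (∅ : Finset (Fin n)) I 0
  simpa [Lc, Gc] using this

lemma good_id {n : ℕ} {Sch : Equiv.Perm (Fin n) → MvPolynomial (Fin n) ℤ}
    (hbase : Sch Fin.revPerm = ∏ i : Fin n, X i ^ (n - 1 - (i : ℕ)))
    (hrec : SchRec Sch) (w : Equiv.Perm (Fin n)) (h : ∀ a b, a < b → ¬ w b < w a) :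
    Good w (Sch w) := by
  have hd : Dom w := fun a b c _ h2 _ h4 => h b c h2 h4
  have h1 : Sch w = 1 := by
    rw [dominant_formula hbase hrec w hd]
    apply Finset.prod_eq_one
    intro a _
    have : lcode w a = 0 := by
      unfold lcode
      rw [Finset.card_eq_zero, Finset.filter_eq_empty_iff]
      rintro b _ ⟨h1, h2⟩
      exact h a b h1 h2
    rw [this, pow_zero]
  have h2 : rothe w = ∅ := by
    ext ⟨i, j⟩
    simp only [rothe, Finset.mem_filter, Finset.mem_univ, true_and, Finset.notMem_empty, iff_false]
    rintro ⟨h3, h4⟩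
    apply h i (w⁻¹ j) h4
    simpa using h3
  have h3 : ∀ d : Fin n →₀ ℕ, (Sch w).coeff d ≠ 0 → d = 0 := by
    intro d hd
    rw [h1, MvPolynomial.coeff_one] at hd
    by_contra hne
    rw [if_neg (fun h => hne h.symm)] at hd
    exact hd rfl
  have h4 : ∀ I, theta (rothe w) I = 0 := by
    intro I
    rw [h2, theta_sum w]
    apply Finset.sum_eq_zero
    intro p _
    have : colSet (∅ : Finset (Fin n × Fin n)) (w p) = ∅ := by simp [colSet]
    rw [this, rk_empty]
  refine ⟨?_, ?_, ?_, ?_⟩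
  · intro d
    rw [h1, MvPolynomial.coeff_one]
    split_ifs <;> simp
  · intro d hd
    rw [h3 d hd, h2]; simp
  · intro d hd I
    rw [h3 d hd]; simp
  · intro σ
    refine ⟨0, ?_, ?_⟩
    · rw [h1]; simp
    · intro m
      rw [h4]; simp

lemma exists_trans {n : ℕ} (w : Equiv.Perm (Fin n)) (h : ∃ a b, a < b ∧ w b < w a) :
    ∃ r s, TransData w r s := by
  classical
  set R := Finset.univ.filter fun a => ∃ b, a < b ∧ w b < w a with hR
  have hne : R.Nonempty := by
    obtain ⟨a, b, h⟩ := h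
    exact ⟨a, by simp only [hR, Finset.mem_filter, Finset.mem_univ, true_and]; exact ⟨b, h⟩⟩
  obtain ⟨r, hr, hrmax⟩ := R.exists_max_image id hne
  simp only [hR, Finset.mem_filter, Finset.mem_univ, true_and, id] at hr hrmax
  set S := Finset.univ.filter fun b => r < b ∧ w b < w r with hS
  have hne : S.Nonempty := by
    obtain ⟨b, h⟩ := hr
    exact ⟨b, by simp only [hS, Finset.mem_filter, Finset.mem_univ, true_and]; exact h⟩
  obtain ⟨s, hs, hsmax⟩ := S.exists_max_image id hne
  simp only [hS, Finset.mem_filter, Finset.mem_univ, true_and, id] at hs hsmax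
  refine ⟨r, s, hs.1, hs.2, ?_, ?_⟩
  · intro a b hra hab
    by_contra hlt
    have : w b ≠ w a := fun h => hab.ne' (w.injective h)
    exact absurd (hrmax a ⟨b, hab, lt_of_le_of_ne (not_lt.1 hlt) this⟩) (not_le.2 hra)
  · intro b hb
    by_contra hlt
    have : w b ≠ w r := fun h => (hs.1.trans hb).ne' (w.injective h)
    exact absurd (hsmax b ⟨hs.1.trans hb, lt_of_le_of_ne (not_lt.1 hlt) this⟩) (not_le.2 hb)

lemma Jset_zero {n : ℕ} (σ : Equiv.Perm (Fin n)) : Jset σ 0 = ∅ := by simp [Jset]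

lemma Jset_mono {n : ℕ} (σ : Equiv.Perm (Fin n)) (m : ℕ) : Jset σ m ⊆ Jset σ (m + 1) := by
  intro x
  simp only [Jset, Finset.mem_filter, Finset.mem_univ, true_and]
  omega

lemma Jset_step {n : ℕ} (σ : Equiv.Perm (Fin n)) (m : ℕ) :
    ∃ A : Finset (Fin n), A.card ≤ 1 ∧ Jset σ (m + 1) = Jset σ m ∪ A := by
  refine ⟨Finset.univ.filter fun x => (σ x : ℕ) = m, ?_, ?_⟩
  · rw [Finset.card_le_one]
    intro a ha b hb
    simp only [Finset.mem_filter, Finset.mem_univ, true_and] at ha hb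
    apply σ.injective
    ext
    omega
  · ext x
    simp only [Jset, Finset.mem_union, Finset.mem_filter, Finset.mem_univ, true_and]
    omega

lemma sum_add_single {n : ℕ} (r : Fin n) (d : Fin n →₀ ℕ) (I : Finset (Fin n)) :
    ∑ i ∈ I, (Finsupp.single r 1 + d : Fin n →₀ ℕ) i = ∑ i ∈ I, d i + if r ∈ I then 1 else 0 := by
  simp only [Finsupp.add_apply, Finset.sum_add_distrib, Finsupp.single_apply]
  rw [add_comm]
  simp

lemma good_step {n : ℕ} {Sch : Equiv.Perm (Fin n) → MvPolynomial (Fin n) ℤ}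
    (hbase : Sch Fin.revPerm = ∏ i : Fin n, X i ^ (n - 1 - (i : ℕ)))
    (hrec : SchRec Sch) (w : Equiv.Perm (Fin n)) (r s : Fin n) (T : TransData w r s)
    (hv : Good (w * Equiv.swap r s) (Sch (w * Equiv.swap r s)))
    (hv' : ∀ q, cov (w * Equiv.swap r s) q r →
      Good (w * Equiv.swap r s * Equiv.swap q r) (Sch (w * Equiv.swap r s * Equiv.swap q r))) :
    Good w (Sch w) := by
  classical
  have key := transition hbase hrec w r s T.hrs T.hw T.h1 T.h2
  have hco : ∀ d, (Sch w).coeff d = (X r * Sch (w * Equiv.swap r s)).coeff d +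
      ∑ q, if cov (w * Equiv.swap r s) q r then
        (Sch (w * Equiv.swap r s * Equiv.swap q r)).coeff d else 0 := by
    intro d
    rw [key, MvPolynomial.coeff_add, MvPolynomial.coeff_sum]
    congr 1
    apply Finset.sum_congr rfl
    intro q _
    split_ifs <;> simp
  have hn1 : ∀ d, 0 ≤ (X r * Sch (w * Equiv.swap r s)).coeff d := by
    intro d
    rw [MvPolynomial.coeff_X_mul']
    split_ifs
    · exact hv.nonneg _
    · exact le_rfl
  have hn2 : ∀ d, ∀ q ∈ Finset.univ, 0 ≤ (if cov (w * Equiv.swap r s) q r then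
        (Sch (w * Equiv.swap r s * Equiv.swap q r)).coeff d else 0) := by
    intro d q _
    split_ifs with h
    · exact (hv' q h).nonneg _
    · exact le_rfl
  have hcase : ∀ d, (Sch w).coeff d ≠ 0 →
      (∃ d', d = Finsupp.single r 1 + d' ∧ (Sch (w * Equiv.swap r s)).coeff d' ≠ 0) ∨
      ∃ q, cov (w * Equiv.swap r s) q r ∧
        (Sch (w * Equiv.swap r s * Equiv.swap q r)).coeff d ≠ 0 := by
    intro d hd
    rw [hco] at hd
    by_cases h0 : (X r * Sch (w * Equiv.swap r s)).coeff d = 0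
    · right
      rw [h0, zero_add] at hd
      obtain ⟨q, _, hq⟩ := Finset.exists_ne_zero_of_sum_ne_zero hd
      by_cases hc : cov (w * Equiv.swap r s) q r
      · exact ⟨q, hc, by rwa [if_pos hc] at hq⟩
      · rw [if_neg hc] at hq; exact absurd rfl hq
    · left
      rw [MvPolynomial.coeff_X_mul'] at h0
      split_ifs at h0 with hr
      · refine ⟨d - Finsupp.single r 1, ?_, h0⟩
        rw [add_tsub_cancel_of_le]
        rw [Finsupp.single_le_iff]
        exact Nat.one_le_iff_ne_zero.2 (Finsupp.mem_support_iff.1 hr)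
      · exact absurd rfl h0
  have hb1 : ∀ d, (Sch (w * Equiv.swap r s)).coeff d ≠ 0 →
      (Sch w).coeff (Finsupp.single r 1 + d) ≠ 0 := by
    intro d hd
    have h2 := Finset.sum_nonneg (hn2 (Finsupp.single r 1 + d))
    have h3 := hv.nonneg d
    rw [hco, MvPolynomial.coeff_X_mul]
    have : 0 < (Sch (w * Equiv.swap r s)).coeff d := lt_of_le_of_ne h3 (Ne.symm hd)
    exact (add_pos_of_pos_of_nonneg this h2).ne'
  have hb2 : ∀ q, cov (w * Equiv.swap r s) q r → ∀ d,
      (Sch (w * Equiv.swap r s * Equiv.swap q r)).coeff d ≠ 0 → (Sch w).coeff d ≠ 0 := by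
    intro q hq d hd
    have h3 : 0 < (Sch (w * Equiv.swap r s * Equiv.swap q r)).coeff d :=
      lt_of_le_of_ne ((hv' q hq).nonneg d) (Ne.symm hd)
    have h4 := Finset.single_le_sum (hn2 d) (Finset.mem_univ q)
    rw [if_pos hq] at h4
    rw [hco]
    exact (add_pos_of_nonneg_of_pos (hn1 d) (lt_of_lt_of_le h3 h4)).ne'
  refine ⟨?_, ?_, ?_, ?_⟩
  · intro d
    rw [hco]
    exact add_nonneg (hn1 d) (Finset.sum_nonneg (hn2 d))
  · intro d hd
    rcases hcase d hd with ⟨d', rfl, h⟩ | ⟨q, hq, h⟩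
    · rw [sum_add_single, hv.card d' h, if_pos (Finset.mem_univ r), card_v T]
    · rw [(hv' q hq).card d h]
      obtain ⟨a, b, c⟩ := (cov_iff T).1 hq
      exact card_v' T a b c
  · intro d hd I
    rcases hcase d hd with ⟨d', rfl, h⟩ | ⟨q, hq, h⟩
    · rw [sum_add_single]
      exact (Nat.add_le_add_right (hv.le d' h I) _).trans (theta_v_le T I)
    · obtain ⟨a, b, c⟩ := (cov_iff T).1 hq
      exact ((hv' q hq).le d h I).trans (theta_v'_le T a b c I)
  · intro σ
    rcases chain_alt (Sset_lt (w := w) (r := r) (s := s)) (Jset σ) (Jset_zero σ) (Jset_mono σ)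
      (Jset_step σ) with h | ⟨t, htr, htS, h⟩
    · obtain ⟨d, hd, hd'⟩ := hv.ex σ
      refine ⟨_, hb1 d hd, fun m => ?_⟩
      rw [sum_add_single, hd', theta_v_eq T _ (h m)]
    · have hts : w t < w s := by
        simp only [Sset, Finset.mem_filter, Finset.mem_univ, true_and, not_and, not_lt] at htS
        exact lt_of_le_of_ne (htS htr) (fun h => (htr.trans T.hrs).ne (w.injective h))
      obtain ⟨q, hq, hqmax⟩ := (Finset.univ.filter fun i => t ≤ i ∧ i < r ∧ w i < w s).exists_max_image
        w ⟨t, by simp only [Finset.mem_filter, Finset.mem_univ, true_and]; exact ⟨le_rfl, htr, hts⟩⟩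
      simp only [Finset.mem_filter, Finset.mem_univ, true_and] at hq hqmax
      obtain ⟨htq, hqr, hqs⟩ := hq
      have hmax : ∀ c, t ≤ c → c < r → w c ≤ w q ∨ w s < w c := by
        intro c h1 h2
        by_cases h3 : w s < w c
        · exact Or.inr h3
        · left
          apply hqmax c ⟨h1, h2, lt_of_le_of_ne (not_lt.1 h3) ?_⟩
          exact fun h => (h2.trans T.hrs).ne (w.injective h)
      have hc : ∀ c, q < c → c < r → w c < w q ∨ w s < w c := by
        intro c h1 h2
        rcases hmax c (htq.trans h1.le) h2 with h3 | h3
        · exact Or.inl (lt_of_le_of_ne h3 fun h => h1.ne' (w.injective h))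
        · exact Or.inr h3
      have hcov := (cov_iff T).2 ⟨hqr, hqs, hc⟩
      obtain ⟨d, hd, hd'⟩ := (hv' q hcov).ex σ
      refine ⟨d, hb2 q hcov d hd, fun m => ?_⟩
      rw [hd', theta_v'_eq T htq hqr hqs hc hmax _ (h m)]

lemma good_all {n : ℕ} {Sch : Equiv.Perm (Fin n) → MvPolynomial (Fin n) ℤ}
    (hbase : Sch Fin.revPerm = ∏ i : Fin n, X i ^ (n - 1 - (i : ℕ)))
    (hrec : SchRec Sch) : ∀ (N : ℕ) (w : Equiv.Perm (Fin n)), (rothe w).card = N →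
    Good w (Sch w) := by
  intro N
  induction N using Nat.strong_induction_on with
  | _ N ihN =>
  intro w
  induction w using lex_ind with
  | h w ih =>
  intro hN
  by_cases hinv : ∃ a b, a < b ∧ w b < w a
  · obtain ⟨r, s, T⟩ := exists_trans w hinv
    apply good_step hbase hrec w r s T
    · have := card_v T
      exact ihN (rothe (w * Equiv.swap r s)).card (by omega) _ rfl
    · intro q hq
      obtain ⟨hqr, hqs, hc⟩ := (cov_iff T).1 hq
      apply ih
      · refine ⟨q, ?_, ?_⟩
        · intro k hk
          have h1 := hk.trans hqr
          have h2 := h1.trans T.hrs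
          simp [Equiv.swap_apply_of_ne_of_ne hk.ne h1.ne, Equiv.swap_apply_of_ne_of_ne h1.ne h2.ne]
        · simpa using hqs
      · rw [card_v' T hqr hqs hc, hN]
  · push Not at hinv
    exact good_id hbase hrec w (fun a b h => not_lt.2 (hinv a b h))

/-! ### Polytopes -/

lemma abel_aux {n : ℕ} (σ : Equiv.Perm (Fin n)) (c b : Fin n → ℝ)
    (hc : ∀ x y, σ x ≤ σ y → c y ≤ c x) (hb : ∀ m, 0 ≤ ∑ i ∈ Jset σ m, b i) (m : ℕ) :
    ∀ l : ℝ, (∀ x ∈ Jset σ m, l ≤ c x) → 0 ≤ ∑ x ∈ Jset σ m, (c x - l) * b x := by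
  induction m with
  | zero => intro l _; simp [Jset_zero]
  | succ m ih =>
    intro l hl
    by_cases hm : m < n
    · set y := σ.symm ⟨m, hm⟩ with hy
      have hσy : σ y = ⟨m, hm⟩ := by simp [hy]
      have hyJ : y ∈ Jset σ (m + 1) := by
        simp [Jset, hσy]
      have hyn : y ∉ Jset σ m := by
        simp [Jset, hσy]
      have hJ : Jset σ (m + 1) = insert y (Jset σ m) := by
        ext x
        simp only [Jset, Finset.mem_insert, Finset.mem_filter, Finset.mem_univ, true_and]
        constructor
        · intro h
          by_cases h' : (σ x : ℕ) = m
          · left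
            rw [hy, Equiv.eq_symm_apply]
            ext
            exact h'
          · right; omega
        · rintro (rfl | h)
          · rw [hσy]; simp
          · omega
      have h1 := ih (c y) (by
        intro x hx
        apply hc
        simp only [Jset, Finset.mem_filter, Finset.mem_univ, true_and] at hx
        rw [hσy, Fin.le_def]
        exact hx.le)
      have h2 : 0 ≤ (c y - l) * ∑ x ∈ Jset σ (m + 1), b x :=
        mul_nonneg (sub_nonneg.2 (hl y hyJ)) (hb _)
      have h3 : ∑ x ∈ Jset σ (m + 1), (c x - l) * b x =
          ∑ x ∈ Jset σ m, (c x - c y) * b x + (c y - l) * ∑ x ∈ Jset σ (m + 1), b x := by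
        have h4 : ∑ x ∈ Jset σ m, (c x - l) * b x =
            ∑ x ∈ Jset σ m, (c x - c y) * b x + ∑ x ∈ Jset σ m, (c y - l) * b x := by
          rw [← Finset.sum_add_distrib]
          apply Finset.sum_congr rfl
          intro x _
          ring
        rw [hJ, Finset.sum_insert hyn, Finset.sum_insert hyn, mul_add, Finset.mul_sum, h4]
        ring
      rw [h3]
      exact add_nonneg h1 h2
    · have hJ : Jset σ (m + 1) = Jset σ m := by
        ext x
        have := (σ x).2
        simp only [Jset, Finset.mem_filter, Finset.mem_univ, true_and]
        omega
      rw [hJ] at hl ⊢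
      exact ih l hl

lemma Jset_top {n : ℕ} (σ : Equiv.Perm (Fin n)) : Jset σ n = Finset.univ := by
  ext x
  simp [Jset]

lemma abel {n : ℕ} (σ : Equiv.Perm (Fin n)) (c b : Fin n → ℝ)
    (hc : ∀ x y, σ x ≤ σ y → c y ≤ c x) (hb : ∀ m, 0 ≤ ∑ i ∈ Jset σ m, b i)
    (h0 : ∑ i, b i = 0) : 0 ≤ ∑ x, c x * b x := by
  have h := abel_aux σ c b hc hb n (-∑ i, |c i|) (by
    intro x _
    have h1 := Finset.single_le_sum (f := fun i => |c i|) (fun i _ => abs_nonneg (c i))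
      (Finset.mem_univ x)
    have h2 := neg_abs_le (c x)
    linarith)
  rw [Jset_top] at h
  simp only [sub_mul, Finset.sum_sub_distrib, ← Finset.mul_sum, h0] at h
  simpa using h

lemma exists_order {n : ℕ} (c : Fin n → ℝ) :
    ∃ σ : Equiv.Perm (Fin n), ∀ x y, σ x ≤ σ y → c y ≤ c x := by
  refine ⟨(Tuple.sort (fun i => - c i)).symm, fun x y h => ?_⟩
  have := Tuple.monotone_sort (fun i => - c i) h
  simpa using this

lemma convex_schubitope {n : ℕ} (D : Finset (Fin n × Fin n)) : Convex ℝ (schubitope D) := by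
  rintro x ⟨hx1, hx2, hx3⟩ y ⟨hy1, hy2, hy3⟩ a b ha hb hab
  refine ⟨?_, ?_, ?_⟩
  · intro i
    have h1 := mul_nonneg ha (hx1 i)
    have h2 := mul_nonneg hb (hy1 i)
    simp only [Pi.add_apply, Pi.smul_apply, smul_eq_mul]
    linarith
  · simp only [Pi.add_apply, Pi.smul_apply, smul_eq_mul, Finset.sum_add_distrib,
      ← Finset.mul_sum, hx2, hy2]
    rw [← add_mul, hab, one_mul]
  · intro I
    simp only [Pi.add_apply, Pi.smul_apply, smul_eq_mul, Finset.sum_add_distrib,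
      ← Finset.mul_sum]
    have h1 := mul_le_mul_of_nonneg_left (hx3 I) ha
    have h2 := mul_le_mul_of_nonneg_left (hy3 I) hb
    calc _ ≤ a * (theta D I : ℝ) + b * (theta D I : ℝ) := add_le_add h1 h2
      _ = (theta D I : ℝ) := by rw [← add_mul, hab, one_mul]

lemma polytope_eq {n : ℕ} (w : Equiv.Perm (Fin n)) (f : MvPolynomial (Fin n) ℤ) (h : Good w f) :
    newtonPolytope f = schubitope (rothe w) := by
  apply Set.Subset.antisymm
  · apply convexHull_min _ (convex_schubitope _)
    rintro _ ⟨d, hd, rfl⟩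
    have hd' : f.coeff d ≠ 0 := MvPolynomial.mem_support_iff.1 hd
    refine ⟨fun i => Nat.cast_nonneg _, ?_, ?_⟩
    · rw [← h.card d hd']; push_cast; rfl
    · intro I
      have := h.le d hd' I
      have h2 : ∑ i ∈ I, (d i : ℝ) ≤ (theta (rothe w) I : ℝ) := by exact_mod_cast this
      exact h2
  · rintro a ⟨_, ha2, ha3⟩
    by_contra hna
    unfold newtonPolytope at hna
    set P := convexHull ℝ ((fun (d : Fin n →₀ ℕ) (i : Fin n) => ((d i : ℕ) : ℝ)) '' ↑f.support)
      with hP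
    have hfin : ((fun (d : Fin n →₀ ℕ) (i : Fin n) => ((d i : ℕ) : ℝ)) '' ↑f.support).Finite :=
      (Finset.finite_toSet _).image _
    have hcl : IsClosed P := hfin.isClosed_convexHull ℝ
    obtain ⟨g, u, hg1, hg2⟩ := geometric_hahn_banach_closed_point (convex_convexHull ℝ _) hcl hna
    set c : Fin n → ℝ := fun i => g (Pi.single i 1) with hc
    have hgc : ∀ x : Fin n → ℝ, g x = ∑ i, c i * x i := by
      intro x
      conv_lhs => rw [pi_eq_sum_univ' x]
      rw [map_sum]
      apply Finset.sum_congr rfl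
      intro i _
      rw [map_smul, smul_eq_mul, mul_comm]
    obtain ⟨σ, hσ⟩ := exists_order c
    obtain ⟨d, hd, hd'⟩ := h.ex σ
    have h1 := hg1 (fun i => ((d i : ℕ) : ℝ))
      (subset_convexHull ℝ _ ⟨d, MvPolynomial.mem_support_iff.2 hd, rfl⟩)
    have h2 := abel σ c (fun i => (d i : ℝ) - a i) hσ (by
      intro m
      have e1 : ∑ i ∈ Jset σ m, (d i : ℝ) = (theta (rothe w) (Jset σ m) : ℝ) := by
        exact_mod_cast hd' m
      rw [Finset.sum_sub_distrib, e1]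
      exact sub_nonneg.2 (ha3 _)) (by
      have e1 : ∑ i, (d i : ℝ) = ((rothe w).card : ℝ) := by
        exact_mod_cast h.card d hd
      rw [Finset.sum_sub_distrib, e1, ha2, sub_self])
    simp only [mul_sub, Finset.sum_sub_distrib, ← hgc] at h2
    linarith

/-- The Newton polytope of the Schubert polynomial `𝔖_w` equals the Schubitope
`S_{D(w)}` of the Rothe diagram of `w`. -/
theorem stmt10 (n : ℕ) (Schub : Equiv.Perm (Fin n) → MvPolynomial (Fin n) ℤ)
    -- `𝔖_{w₀} = x_1^{n-1} x_2^{n-2} ⋯ x_{n-1}` for the longest permutation `w₀`.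
    (hbase : Schub Fin.revPerm = ∏ i : Fin n, X i ^ (n - 1 - (i : ℕ)))
    -- For adjacent positions `i, j = i+1` with `w(i) < w(j)`: `𝔖_w = ∂_i 𝔖_{w sᵢ}`, i.e.
    -- `(xᵢ - xⱼ) ⬝ 𝔖_w = 𝔖_{w sᵢ} - sᵢ ⬝ 𝔖_{w sᵢ}`.
    (hrec : ∀ (w : Equiv.Perm (Fin n)) (i j : Fin n), (i : ℕ) + 1 = (j : ℕ) → w i < w j →
      (X i - X j) * Schub w =
        Schub (w * Equiv.swap i j) -
          rename (Equiv.swap i j) (Schub (w * Equiv.swap i j)))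
    (w : Equiv.Perm (Fin n)) :
    newtonPolytope (Schub w) = schubitope (rothe w) := by
  exact polytope_eq w (Schub w) (good_all hbase hrec _ w rfl)
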